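/- arXiv:2101.09032 — 15 statements merged into one kernel-verified Lean document; each statement's English description precedes it below -/
import Mathlib

section
/- A trace τ over (T,X,V) is CC if and only if the transitive closure of po ∪ rf ∪ sto is irreflexive and the composition (po ∪ rf)⁺ ; cf is irreflexive, i.e. there are no transactions t1, t2 with (t1,t2) ∈ (po ∪ rf)⁺ and (t2,t1) ∈ cf. (Lemma 2 of the paper: a trace is possible under causal consistency iff arb0⁺ and vis0⁺;cf are acyclic.) -/
open scoped Classical

/-- A trace over `(T, X, V)`: transactions `T`, shared variables `X`, values `V`.
Each transaction has a read set `RS` with read values `rdval`, a write set `WS`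
with last-written values `wrval`; there is an initial transaction `t0`, a
program order `po`, per-variable read-from relations `rf x` and per-variable
store orders `sto x`. -/
structure TxnTrace (T X V : Type*) where
  RS : T → Set X
  WS : T → Set X
  rdval : T → X → V
  wrval : T → X → V
  t0 : T
  po : T → T → Prop
  rf : X → T → T → Prop
  sto : X → T → T → Prop

/-- a strict partial order: irreflexive and transitive binary relation -/
def StrictPartialRel {α : Type*} (r : α → α → Prop) : Prop :=
  (∀ a, ¬ r a a) ∧ ∀ a b c, r a b → r b c → r a c

/-- a strict total order -/
def StrictTotalRel {α : Type*} (r : α → α → Prop) : Prop :=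
  StrictPartialRel r ∧ ∀ a b, a ≠ b → r a b ∨ r b a

/-- axiom Prefix: `arb ; vis ⊆ vis` -/
def PrefixAx {α : Type*} (vis arb : α → α → Prop) : Prop :=
  ∀ a b c, arb a b → vis b c → vis a c

/-- `vis` is a strict partial order, `arb` a strict total order, `vis ⊆ arb` -/
def GoodPair {α : Type*} (vis arb : α → α → Prop) : Prop :=
  StrictPartialRel vis ∧ StrictTotalRel arb ∧ ∀ a b, vis a b → arb a b

namespace TxnTrace

variable {T X V : Type*} (τ : TxnTrace T X V)

/-- the well-formedness conditions of a trace -/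
structure WellFormed : Prop where
  rs_init : τ.RS τ.t0 = ∅
  ws_init : τ.WS τ.t0 = Set.univ
  po_irrefl : ∀ t, ¬ τ.po t t
  po_trans : ∀ a b c, τ.po a b → τ.po b c → τ.po a c
  po_init : ∀ t, t ≠ τ.t0 → τ.po τ.t0 t
  rf_wf : ∀ x t' t, τ.rf x t' t →
    t' ≠ t ∧ x ∈ τ.RS t ∧ x ∈ τ.WS t' ∧ τ.wrval t' x = τ.rdval t x
  rf_total : ∀ t x, x ∈ τ.RS t → ∃! t', τ.rf x t' t
  sto_dom : ∀ x a b, τ.sto x a b → x ∈ τ.WS a ∧ x ∈ τ.WS b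
  sto_irrefl : ∀ x a, ¬ τ.sto x a a
  sto_trans : ∀ x a b c, τ.sto x a b → τ.sto x b c → τ.sto x a c
  sto_total : ∀ x a b, x ∈ τ.WS a → x ∈ τ.WS b → a ≠ b → τ.sto x a b ∨ τ.sto x b a

/-- `rf = ⋃ x, rf x` -/
def rfR (a b : T) : Prop := ∃ x, τ.rf x a b

/-- `sto = ⋃ x, sto x` -/
def stoR (a b : T) : Prop := ∃ x, τ.sto x a b

/-- the conflict relation: `(t1,t3) ∈ cf` iff `t1 ≠ t3` and there are `x`, `t2`
with `(t2,t1) ∈ rf_x` and `(t2,t3) ∈ sto_x` -/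
def cf (a b : T) : Prop := a ≠ b ∧ ∃ x w, τ.rf x w a ∧ τ.sto x w b

/-- `vis0 = po ∪ rf` -/
def vis0 (a b : T) : Prop := τ.po a b ∨ τ.rfR a b

/-- `arb0 = po ∪ rf ∪ sto` -/
def arb0 (a b : T) : Prop := τ.po a b ∨ τ.rfR a b ∨ τ.stoR a b

/-- happens-before: `(po ∪ rf ∪ sto ∪ cf)⁺` -/
def hb : T → T → Prop := Relation.TransGen (fun a b => τ.arb0 a b ∨ τ.cf a b)

/-- axiom PoCo: `vis0⁺ ⊆ vis` -/
def PoCo (vis : T → T → Prop) : Prop := ∀ a b, Relation.TransGen τ.vis0 a b → vis a b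

/-- axiom CoArb: `arb0⁺ ⊆ arb` -/
def CoArb (arb : T → T → Prop) : Prop := ∀ a b, Relation.TransGen τ.arb0 a b → arb a b

/-- axiom RetVal: every read of `x` in `t` reads from the `arb`-greatest
`vis`-predecessor of `t` writing `x` -/
def RetVal (vis arb : T → T → Prop) : Prop :=
  ∀ t x, x ∈ τ.RS t → ∃ t00,
    (vis t00 t ∧ x ∈ τ.WS t00) ∧
    (∀ t', vis t' t → x ∈ τ.WS t' → t' ≠ t00 → arb t' t00) ∧
    τ.rf x t00 t


/-- axiom Conflict: `sto ⊆ vis` -/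
def ConflictAx (vis : T → T → Prop) : Prop := ∀ a b, τ.stoR a b → vis a b


/-- causal consistency -/
def IsCC : Prop :=
  ∃ vis arb, GoodPair vis arb ∧ τ.PoCo vis ∧ τ.CoArb arb ∧ τ.RetVal vis arb

/-- prefix consistency -/
def IsPC : Prop :=
  ∃ vis arb, GoodPair vis arb ∧ τ.PoCo vis ∧ τ.CoArb arb ∧ τ.RetVal vis arb ∧
    PrefixAx vis arb

/-- snapshot isolation -/
def IsSI : Prop :=
  ∃ vis arb, GoodPair vis arb ∧ τ.PoCo vis ∧ τ.CoArb arb ∧ τ.RetVal vis arb ∧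
    PrefixAx vis arb ∧ τ.ConflictAx vis

/-- serializability: some strict total order `arb` with `arb0⁺ ⊆ arb` satisfies
RetVal with `vis = arb` -/
def IsSER : Prop :=
  ∃ arb, StrictTotalRel arb ∧ τ.CoArb arb ∧ τ.RetVal arb arb

/-- the read part `t_rd` of a transaction in the split trace -/
def rdPart (t : T) : T × Bool := (t, false)

/-- the write part `t_wr` of a transaction in the split trace;
the initial transaction `t0` is kept unchanged and plays both roles -/
noncomputable def wrPart (t : T) : T × Bool := if t = τ.t0 then (t, false) else (t, true)

/-- the split trace `τ_split`: every transaction `t ≠ t0` is split into a read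
part `t_rd` and a write part `t_wr`; `po'` is the smallest transitive relation
containing `(t_rd, t_wr)` for every split `t` and `(u_wr, v_rd)` for `(u,v) ∈ po`;
`rf'_x = {(u_wr, v_rd) : (u,v) ∈ rf_x}`; `sto'_x = {(u_wr, v_wr) : (u,v) ∈ sto_x}`.
(The pair `(t0, true)` is an unused dummy element with empty read and write sets and
no incident relations.) -/
noncomputable def split : TxnTrace (T × Bool) X V where
  RS p := if p = rdPart p.1 then τ.RS p.1 else ∅
  WS p := if p = τ.wrPart p.1 then τ.WS p.1 else ∅
  rdval p x := τ.rdval p.1 x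
  wrval p x := τ.wrval p.1 x
  t0 := (τ.t0, false)
  po := Relation.TransGen (fun a b =>
    (∃ t, t ≠ τ.t0 ∧ a = rdPart t ∧ b = τ.wrPart t) ∨
    (∃ u v, τ.po u v ∧ a = τ.wrPart u ∧ b = rdPart v))
  rf := fun x a b => ∃ u v, τ.rf x u v ∧ a = τ.wrPart u ∧ b = rdPart v
  sto := fun x a b => ∃ u v, τ.sto x u v ∧ a = τ.wrPart u ∧ b = τ.wrPart v

end TxnTrace

/-- Lemma 2: a trace is CC iff `(po ∪ rf ∪ sto)⁺` is irreflexive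
and `(po ∪ rf)⁺ ; cf` is irreflexive. -/
theorem cc_iff_acyclic {T X V : Type*} [Fintype T] (τ : TxnTrace T X V)
    (hwf : τ.WellFormed) :
    τ.IsCC ↔
      ((∀ t, ¬ Relation.TransGen τ.arb0 t t) ∧
       ∀ t1 t2, Relation.TransGen τ.vis0 t1 t2 → ¬ τ.cf t2 t1) := by
  constructor
  · rintro ⟨vis, arb, ⟨hvis, harb, hsub⟩, hpo, hco, hret⟩
    refine ⟨fun t h => harb.1.1 t (hco t t h), ?_⟩
    rintro t1 t2 h ⟨_, x, w, hrf, hsto⟩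
    have hx := (hwf.rf_wf x w t2 hrf).2.1
    obtain ⟨t00, _, hmax, hrf0⟩ := hret t2 x hx
    have e : t00 = w := (hwf.rf_total t2 x hx).unique hrf0 hrf
    subst e
    have hne : t1 ≠ t00 := by
      rintro rfl
      exact hwf.sto_irrefl x _ hsto
    have h1 := hmax t1 (hpo _ _ h) (hwf.sto_dom x _ _ hsto).2 hne
    have h2 := hco t00 t1 (Relation.TransGen.single (Or.inr (Or.inr ⟨x, hsto⟩)))
    exact harb.1.1 _ (harb.1.2 _ _ _ h1 h2)
  · rintro ⟨hac, hcf⟩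
    have hva : ∀ a b, Relation.TransGen τ.vis0 a b → Relation.TransGen τ.arb0 a b := by
      intro a b h
      refine Relation.TransGen.mono (r := τ.vis0) ?_ _ _ h
      rintro a b (h | h)
      · exact Or.inl h
      · exact Or.inr (Or.inl h)
    let P : PartialOrder T :=
      { le := fun a b => a = b ∨ Relation.TransGen τ.arb0 a b
        le_refl := fun a => Or.inl rfl
        le_trans := by
          rintro a b c (rfl | h1) (rfl | h2)
          · exact Or.inl rfl
          · exact Or.inr h2
          · exact Or.inr h1
          · exact Or.inr (h1.trans h2)
        le_antisymm := by
          rintro a b (h | h1) (h' | h2)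
          · exact h
          · exact h
          · exact h'.symm
          · exact absurd (h1.trans h2) (hac a) }
    obtain ⟨s, hs, hrs⟩ := extend_partialOrder P.le
    have hsub : ∀ a b, Relation.TransGen τ.arb0 a b → s a b ∧ a ≠ b := by
      intro a b h
      refine ⟨hrs a b (Or.inr h), ?_⟩
      rintro rfl
      exact hac _ h
    refine ⟨Relation.TransGen τ.vis0, fun a b => s a b ∧ a ≠ b,
      ⟨⟨fun a h => hac a (hva a a h), fun a b c h1 h2 => h1.trans h2⟩,
        ⟨⟨fun a h => h.2 rfl, ?_⟩, ?_⟩, fun a b h => hsub a b (hva a b h)⟩,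
      fun a b h => h, hsub, ?_⟩
    · rintro a b c ⟨h1, n1⟩ ⟨h2, n2⟩
      refine ⟨_root_.trans h1 h2, ?_⟩
      rintro rfl
      exact n1 (antisymm h1 h2)
    · intro a b hab
      rcases total_of s a b with h | h
      · exact Or.inl ⟨h, hab⟩
      · exact Or.inr ⟨h, hab.symm⟩
    · intro t x hx
      obtain ⟨w, hrf, _⟩ := hwf.rf_total t x hx
      have hw := (hwf.rf_wf x w t hrf).2.2.1
      refine ⟨w, ⟨Relation.TransGen.single (Or.inr ⟨x, hrf⟩), hw⟩, ?_, hrf⟩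
      intro t' hv hx' hne
      rcases hwf.sto_total x t' w hx' hw hne with h | h
      · exact hsub _ _ (Relation.TransGen.single (Or.inr (Or.inr ⟨x, h⟩)))
      · refine absurd ⟨?_, x, w, hrf, h⟩ (hcf t' t hv)
        rintro rfl
        exact hac _ (hva _ _ hv)
end

section
/- Let τ be a trace over (T,X,V), vis a strict partial order on T and arb a strict total order on T with vis ⊆ arb, satisfying PoCo and CoArb. Then the axiom RetVal holds for (vis,arb) if and only if vis ; cf is irreflexive, i.e. there are no transactions t1, t2 with (t1,t2) ∈ vis and (t2,t1) ∈ cf. (Claim used in the proofs of Lemmas 2 and 5: 'the axiom RetVal is equivalent to the acyclicity of vis;cf when PoCo and CoArb hold'.) -/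
open scoped Classical

/-- under PoCo and CoArb, RetVal holds iff `vis ; cf` is irreflexive. -/
theorem retVal_iff_vis_cf_irrefl {T X V : Type*} [Fintype T] (τ : TxnTrace T X V)
    (hwf : τ.WellFormed) (vis arb : T → T → Prop)
    (hvis : StrictPartialRel vis) (harb : StrictTotalRel arb)
    (hsub : ∀ a b, vis a b → arb a b)
    (hpoco : τ.PoCo vis) (hcoarb : τ.CoArb arb) :
    τ.RetVal vis arb ↔ ∀ t1 t2, vis t1 t2 → ¬ τ.cf t2 t1 := by
  have hsto : ∀ x a b, τ.sto x a b → arb a b := fun x a b h =>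
    hcoarb a b (Relation.TransGen.single (Or.inr (Or.inr ⟨x, h⟩)))
  have hrf : ∀ x a b, τ.rf x a b → vis a b := fun x a b h =>
    hpoco a b (Relation.TransGen.single (Or.inr ⟨x, h⟩))
  constructor
  · rintro hret t1 t2 h12 ⟨_, x, w, hw, hs⟩
    have hx := (hwf.rf_wf x w t2 hw).2.1
    obtain ⟨t00, _, hmax, hr⟩ := hret t2 x hx
    obtain rfl : t00 = w := (hwf.rf_total t2 x hx).unique hr hw
    have hne : t1 ≠ t00 := by
      rintro rfl
      exact hwf.sto_irrefl x _ hs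
    have h1 := hmax t1 h12 (hwf.sto_dom x _ _ hs).2 hne
    exact harb.1.1 _ (harb.1.2 _ _ _ h1 (hsto x _ _ hs))
  · intro hirr t x hx
    obtain ⟨w, hw, _⟩ := hwf.rf_total t x hx
    have hww := (hwf.rf_wf x w t hw).2.2.1
    refine ⟨w, ⟨hrf x w t hw, hww⟩, ?_, hw⟩
    intro t' hv hx' hne
    rcases hwf.sto_total x t' w hx' hww hne with h | h
    · exact hsto x _ _ h
    · refine absurd ⟨?_, x, w, hw, h⟩ (hirr t' t hv)
      rintro rfl
      exact hvis.1 _ hv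
end

section
/- If a trace τ over (T,X,V) is CC, then its split trace τ_split is CC. (Lemma 1 of the paper, case X = CC.) -/
open scoped Classical

/-- Lemma 1, case CC: if a trace is CC then its split trace is CC. -/
theorem split_preserves_cc {T X V : Type*} [Fintype T] (τ : TxnTrace T X V)
    (hwf : τ.WellFormed) (h : τ.IsCC) : τ.split.IsCC := by
  obtain ⟨vis, arb, ⟨⟨vi, vt⟩, ⟨⟨ai, at'⟩, atot⟩, va⟩, hpo, hco, hret⟩ := h
  have w1 : ∀ t, (τ.wrPart t).1 = t := by
    intro t; unfold TxnTrace.wrPart; split_ifs <;> rfl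
  have lexPO : ∀ r : T → T → Prop, (∀ a, ¬ r a a) → (∀ a b c, r a b → r b c → r a c) →
      StrictPartialRel (fun p q : T × Bool =>
        r p.1 q.1 ∨ (p.1 = q.1 ∧ p.2 = false ∧ q.2 = true)) := by
    intro r hi ht
    refine ⟨?_, ?_⟩
    · rintro ⟨a, b⟩ (h | ⟨-, h1, h2⟩)
      · exact hi _ h
      · simp_all
    · rintro ⟨a, a'⟩ ⟨b, b'⟩ ⟨c, c'⟩ (h | ⟨h, h1, h2⟩) (k | ⟨k, k1, k2⟩)
      · exact Or.inl (ht _ _ _ h k)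
      · simp only at k; subst k; exact Or.inl h
      · simp only at h; subst h; exact Or.inl k
      · simp_all
  have hvPO := lexPO vis vi vt
  have haPO := lexPO arb ai at'
  have hpoV : ∀ a b, τ.split.po a b →
      vis a.1 b.1 ∨ (a.1 = b.1 ∧ a.2 = false ∧ b.2 = true) := by
    intro a b hab
    have step : ∀ a b : T × Bool,
        ((∃ t, t ≠ τ.t0 ∧ a = TxnTrace.rdPart t ∧ b = τ.wrPart t) ∨
          (∃ u v, τ.po u v ∧ a = τ.wrPart u ∧ b = TxnTrace.rdPart v)) →
        vis a.1 b.1 ∨ (a.1 = b.1 ∧ a.2 = false ∧ b.2 = true) := by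
      rintro a b (⟨t, ht, rfl, rfl⟩ | ⟨u, v, huv, rfl, rfl⟩)
      · right; simp [TxnTrace.rdPart, TxnTrace.wrPart, ht]
      · left; rw [w1]; exact hpo _ _ (.single (Or.inl huv))
    induction hab with
    | single h => exact step _ _ h
    | tail _ h ih => exact hvPO.2 _ _ _ ih (step _ _ h)
  have hrfV : ∀ a b, τ.split.rfR a b → vis a.1 b.1 := by
    rintro a b ⟨x, u, v, huv, rfl, rfl⟩
    rw [w1]; exact hpo _ _ (.single (Or.inr ⟨x, huv⟩))
  refine ⟨_, _, ⟨hvPO, ⟨haPO, ?_⟩, ?_⟩, ?_, ?_, ?_⟩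
  · rintro ⟨a, a'⟩ ⟨b, b'⟩ hne
    by_cases hab : a = b
    · subst hab
      cases a' <;> cases b' <;> simp_all
    · rcases atot a b hab with h | h
      · exact Or.inl (Or.inl h)
      · exact Or.inr (Or.inl h)
  · rintro a b (h | h)
    · exact Or.inl (va _ _ h)
    · exact Or.inr h
  · intro a b hab
    have step : ∀ a b, τ.split.vis0 a b →
        vis a.1 b.1 ∨ (a.1 = b.1 ∧ a.2 = false ∧ b.2 = true) := by
      rintro a b (h | h)
      · exact hpoV _ _ h
      · exact Or.inl (hrfV _ _ h)
    induction hab with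
    | single h => exact step _ _ h
    | tail _ h ih => exact hvPO.2 _ _ _ ih (step _ _ h)
  · intro a b hab
    have step : ∀ a b, τ.split.arb0 a b →
        arb a.1 b.1 ∨ (a.1 = b.1 ∧ a.2 = false ∧ b.2 = true) := by
      rintro a b (h | h | ⟨x, u, v, huv, rfl, rfl⟩)
      · exact (hpoV _ _ h).imp (va _ _) id
      · exact Or.inl (va _ _ (hrfV _ _ h))
      · left; rw [w1, w1]; exact hco _ _ (.single (Or.inr (Or.inr ⟨x, huv⟩)))
    induction hab with
    | single h => exact step _ _ h
    | tail _ h ih => exact haPO.2 _ _ _ ih (step _ _ h)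
  · intro t x hx
    have hx' : x ∈ (if t = TxnTrace.rdPart t.1 then τ.RS t.1 else ∅) := hx
    split_ifs at hx' with ht
    · obtain ⟨s, ⟨hs, hsw⟩, hmax, hrf⟩ := hret t.1 x hx'
      refine ⟨τ.wrPart s, ⟨Or.inl (by rw [w1]; exact hs), ?_⟩, ?_, s, t.1, hrf, rfl, ht⟩
      · change x ∈ (if τ.wrPart s = τ.wrPart (τ.wrPart s).1 then τ.WS (τ.wrPart s).1 else ∅)
        rw [w1, if_pos rfl]; exact hsw
      · intro t' hv hw hne
        have hw' : x ∈ (if t' = τ.wrPart t'.1 then τ.WS t'.1 else ∅) := hw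
        split_ifs at hw' with ht'
        · left
          rw [w1]
          refine hmax _ ?_ hw' ?_
          · rcases hv with h | ⟨-, -, h⟩
            · exact h
            · rw [ht] at h; simp [TxnTrace.rdPart] at h
          · intro he
            exact hne (by rw [ht', he])
        · exact absurd hw' (Set.notMem_empty x)
    · exact absurd hx' (Set.notMem_empty x)
end

section
/- If a trace τ over (T,X,V) is PC, then its split trace τ_split is PC. (Lemma 1 of the paper, case X = PC.) -/
open scoped Classical

namespace SplitPC

/-- the number of predecessors of `t` under the relation `R` -/
noncomputable def cnt {T : Type*} [Fintype T] (R : T → T → Prop) (t : T) : ℕ :=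
  (Finset.univ.filter (fun u => R u t)).card

/-- primary sort key in the split trace -/
def k1 {T : Type*} (n r : T → ℕ) (p : T × Bool) : ℕ := if p.2 then r p.1 else n p.1

/-- secondary sort key in the split trace -/
def k2 {T : Type*} (M : ℕ) (r : T → ℕ) (p : T × Bool) : ℕ := if p.2 then M else r p.1

/-- lexicographic order on the keys -/
def lx {α : Type*} (f g : α → ℕ) (a b : α) : Prop := f a < f b ∨ (f a = f b ∧ g a < g b)

lemma lx_trans {α : Type*} {f g : α → ℕ} {a b c : α} (h : lx f g a b) (h' : lx f g b c) :
    lx f g a c := by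
  unfold lx at *; omega

lemma lx_total {α : Type*} {f g : α → ℕ} (hinj : ∀ a b, f a = f b → g a = g b → a = b) :
    StrictTotalRel (lx f g) := by
  refine ⟨⟨fun a h => ?_, fun a b c => lx_trans⟩, fun a b hab => ?_⟩
  · unfold lx at h; omega
  · by_contra hc
    apply hab
    unfold lx at hc
    apply hinj <;> omega

end SplitPC

open SplitPC

/-- Lemma 1, case PC: if a trace is PC then its split trace is PC. -/
theorem split_preserves_pc {T X V : Type*} [Fintype T] (τ : TxnTrace T X V)
    (hwf : τ.WellFormed) (h : τ.IsPC) : τ.split.IsPC := by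
  obtain ⟨vis, arb, ⟨⟨virr, vtr⟩, ⟨⟨airr, atr⟩, atot⟩, vsub⟩, hpo, hco, hret, hpre⟩ := h
  obtain ⟨r, hr⟩ : ∃ r, r = cnt arb := ⟨_, rfl⟩
  obtain ⟨n, hn⟩ : ∃ n, n = cnt vis := ⟨_, rfl⟩
  have hrM : ∀ t, r t < Fintype.card T + 1 := by
    intro t; rw [hr]
    exact Nat.lt_succ_of_le (Finset.card_le_univ _)
  generalize Fintype.card T + 1 = M at hrM
  have har : ∀ u v, arb u v → r u < r v := by
    intro u v huv
    rw [hr]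
    apply Finset.card_lt_card
    rw [Finset.ssubset_iff_of_subset]
    · exact ⟨u, by simpa using huv, by simpa using airr u⟩
    · intro w hw
      simp only [Finset.mem_filter, Finset.mem_univ, true_and] at hw ⊢
      exact atr _ _ _ hw huv
  have hvr : ∀ u v, vis u v → r u < n v := by
    intro u v huv
    rw [hr, hn]
    apply Finset.card_lt_card
    rw [Finset.ssubset_iff_of_subset]
    · exact ⟨u, by simpa using huv, by simpa using airr u⟩
    · intro w hw
      simp only [Finset.mem_filter, Finset.mem_univ, true_and] at hw ⊢
      exact hpre _ _ _ hw huv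
  have hnvr : ∀ u v, ¬ vis u v → n v ≤ r u := by
    intro u v huv
    rw [hr, hn]
    apply Finset.card_le_card
    intro w hw
    simp only [Finset.mem_filter, Finset.mem_univ, true_and] at hw ⊢
    have hne : w ≠ u := by rintro rfl; exact huv hw
    rcases atot _ _ hne with h | h
    · exact h
    · exact absurd (hpre _ _ _ h hw) huv
  have hself : ∀ t, n t ≤ r t := fun t => hnvr t t (virr t)
  have hrinj : ∀ u v, r u = r v → u = v := by
    intro u v huv
    by_contra hne
    rcases atot _ _ hne with h | h
    · have := har _ _ h; omega
    · have := har _ _ h; omega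
  have hv0 : ∀ t, t ≠ τ.t0 → vis τ.t0 t := fun t ht =>
    hpo _ _ (Relation.TransGen.single (Or.inl (hwf.po_init t ht)))
  have ha0 : ∀ t, ¬ arb t τ.t0 := by
    intro t h
    by_cases ht : t = τ.t0
    · subst ht; exact airr _ h
    · exact airr _ (atr _ _ _ h (vsub _ _ (hv0 t ht)))
  have hk1w : ∀ u, k1 n r (τ.wrPart u) ≤ r u := by
    intro u
    unfold TxnTrace.wrPart k1
    have := hself u
    split_ifs <;> simp_all
  have hk1w' : ∀ u, u ≠ τ.t0 → k1 n r (τ.wrPart u) = r u := by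
    intro u hu
    simp [TxnTrace.wrPart, k1, hu]
  have hk2w' : ∀ u, u ≠ τ.t0 → k2 M r (τ.wrPart u) = M := by
    intro u hu
    simp [TxnTrace.wrPart, k2, hu]
  have hk1r : ∀ u, k1 n r (TxnTrace.rdPart u) = n u := fun u => by
    simp [TxnTrace.rdPart, k1]
  have hk2r : ∀ u, k2 M r (TxnTrace.rdPart u) = r u := fun u => by
    simp [TxnTrace.rdPart, k2]
  have ewr : ∀ u v, vis u v → lx (k1 n r) (k2 M r) (τ.wrPart u) (TxnTrace.rdPart v) := by
    intro u v h
    left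
    rw [hk1r]
    exact lt_of_le_of_lt (hk1w u) (hvr _ _ h)
  have eww : ∀ u v, arb u v → lx (k1 n r) (k2 M r) (τ.wrPart u) (τ.wrPart v) := by
    intro u v h
    left
    have hv : v ≠ τ.t0 := by rintro rfl; exact ha0 _ h
    rw [hk1w' v hv]
    exact lt_of_le_of_lt (hk1w u) (har _ _ h)
  have erw : ∀ t, t ≠ τ.t0 → lx (k1 n r) (k2 M r) (TxnTrace.rdPart t) (τ.wrPart t) := by
    intro t ht
    unfold lx
    rw [hk1r, hk2r, hk1w' t ht, hk2w' t ht]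
    have := hself t
    have := hrM t
    omega
  have epo : ∀ a b, τ.split.po a b → lx (k1 n r) (k2 M r) a b := by
    intro a b h
    have step : ∀ a b, ((∃ t, t ≠ τ.t0 ∧ a = TxnTrace.rdPart t ∧ b = τ.wrPart t) ∨
        (∃ u v, τ.po u v ∧ a = τ.wrPart u ∧ b = TxnTrace.rdPart v)) →
        lx (k1 n r) (k2 M r) a b := by
      rintro a b (⟨t, ht, rfl, rfl⟩ | ⟨u, v, huv, rfl, rfl⟩)
      · exact erw t ht
      · exact ewr _ _ (hpo _ _ (Relation.TransGen.single (Or.inl huv)))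
    change Relation.TransGen _ a b at h
    induction h with
    | single h => exact step _ _ h
    | tail _ h ih => exact lx_trans ih (step _ _ h)
  have erf : ∀ a b, τ.split.rfR a b → lx (k1 n r) (k2 M r) a b := by
    rintro a b ⟨x, u, v, h, rfl, rfl⟩
    exact ewr _ _ (hpo _ _ (Relation.TransGen.single (Or.inr ⟨x, h⟩)))
  have esto : ∀ a b, τ.split.stoR a b → lx (k1 n r) (k2 M r) a b := by
    rintro a b ⟨x, u, v, h, rfl, rfl⟩
    exact eww _ _ (hco _ _ (Relation.TransGen.single (Or.inr (Or.inr ⟨x, h⟩))))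
  have htot : StrictTotalRel (lx (k1 n r) (k2 M r)) := by
    apply lx_total
    rintro ⟨t, b⟩ ⟨u, c⟩ h1 h2
    have ht := hrM t
    have hu := hrM u
    have hi := hrinj t u
    cases b <;> cases c <;> simp [k1, k2] at h1 h2
    · rw [hi h2]
    · omega
    · omega
    · rw [hi h1]
  refine ⟨lx (k1 n r) (k2 M r), lx (k1 n r) (k2 M r), ⟨htot.1, htot, fun _ _ h => h⟩,
    ?_, ?_, ?_, fun _ _ _ => lx_trans⟩
  · intro a b h
    have step : ∀ a b, τ.split.vis0 a b → lx (k1 n r) (k2 M r) a b := by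
      rintro a b (h | h)
      · exact epo _ _ h
      · exact erf _ _ h
    induction h with
    | single h => exact step _ _ h
    | tail _ h ih => exact lx_trans ih (step _ _ h)
  · intro a b h
    have step : ∀ a b, τ.split.arb0 a b → lx (k1 n r) (k2 M r) a b := by
      rintro a b (h | h | h)
      · exact epo _ _ h
      · exact erf _ _ h
      · exact esto _ _ h
    induction h with
    | single h => exact step _ _ h
    | tail _ h ih => exact lx_trans ih (step _ _ h)
  · intro p x hx
    simp only [TxnTrace.split] at hx
    split_ifs at hx with hp
    · generalize p.1 = t at hp hx
      subst hp
      have ht0 : t ≠ τ.t0 := by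
        rintro rfl; rw [hwf.rs_init] at hx; exact hx
      obtain ⟨w, ⟨hw1, hw2⟩, hw3, hw4⟩ := hret t x hx
      refine ⟨τ.wrPart w, ⟨ewr _ _ hw1, ?_⟩, ?_, ⟨w, t, hw4, rfl, rfl⟩⟩
      · have h1 : (τ.wrPart w).1 = w := by unfold TxnTrace.wrPart; split_ifs <;> rfl
        simp only [TxnTrace.split]
        rw [h1, if_pos rfl]
        exact hw2
      · intro q hq hqx hqw
        simp only [TxnTrace.split] at hqx
        split_ifs at hqx with hq'
        · generalize q.1 = u at hq' hqx
          subst hq'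
          have huw : u ≠ w := by rintro rfl; exact hqw rfl
          refine eww _ _ (hw3 u ?_ hqx huw)
          by_cases hu : u = τ.t0
          · subst hu; exact hv0 t ht0
          · by_contra hc
            have h1 := hnvr _ _ hc
            have h2 := hrM t
            unfold lx at hq
            rw [hk1r, hk2r, hk1w' u hu, hk2w' u hu] at hq
            omega
        · exact absurd hqx (by simp)
    · exact absurd hx (by simp)
end

section
/- If a trace τ over (T,X,V) is SI, then its split trace τ_split is SI. (Lemma 1 of the paper, case X = SI.) -/
open scoped Classical

section Helpers

/-- number of predecessors -/
noncomputable def predCount {T : Type*} [Fintype T] (r : T → T → Prop) (t : T) : ℕ :=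
  (Finset.univ.filter (fun u => r u t)).card

/-- position of the parts of a split transaction -/
noncomputable def splitKey {T : Type*} [Fintype T] (vis arb : T → T → Prop) (p : T × Bool) :
    ℕ ×ₗ ℕ :=
  toLex (if p.2 then 2 * predCount arb p.1 + 2 else 2 * predCount vis p.1 + 1,
    predCount arb p.1)

variable {T : Type*} [Fintype T] {vis arb : T → T → Prop}

theorem predCount_arb (h : GoodPair vis arb) {u v : T} (huv : arb u v) :
    predCount arb u < predCount arb v := by
  obtain ⟨-, ⟨⟨hi, ht⟩, -⟩, -⟩ := h
  apply Finset.card_lt_card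
  rw [Finset.ssubset_iff_of_subset]
  · exact ⟨u, by simpa using huv, by simpa using hi u⟩
  · intro w hw
    simp only [Finset.mem_filter, Finset.mem_univ, true_and] at hw ⊢
    exact ht _ _ _ hw huv

theorem predCount_vis (h : GoodPair vis arb) (hp : PrefixAx vis arb) {u v : T}
    (huv : vis u v) : predCount arb u < predCount vis v := by
  obtain ⟨-, ⟨⟨hi, ht⟩, -⟩, -⟩ := h
  apply Finset.card_lt_card
  rw [Finset.ssubset_iff_of_subset]
  · exact ⟨u, by simpa using huv, by simpa using hi u⟩
  · intro w hw
    simp only [Finset.mem_filter, Finset.mem_univ, true_and] at hw ⊢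
    exact hp _ _ _ hw huv

theorem predCount_not_vis (h : GoodPair vis arb) (hp : PrefixAx vis arb) {u v : T}
    (huv : ¬ vis u v) : predCount vis v ≤ predCount arb u := by
  obtain ⟨-, ⟨-, htot⟩, -⟩ := h
  apply Finset.card_le_card
  intro w hw
  simp only [Finset.mem_filter, Finset.mem_univ, true_and] at hw ⊢
  have hne : w ≠ u := by rintro rfl; exact huv hw
  rcases htot w u hne with h1 | h1
  · exact h1
  · exact absurd (hp _ _ _ h1 hw) huv

theorem splitKey_total (h : GoodPair vis arb) :
    StrictTotalRel (fun a b => splitKey vis arb a < splitKey vis arb b) := by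
  refine ⟨⟨fun a => lt_irrefl _, fun a b c => lt_trans⟩, ?_⟩
  intro a b hab
  refine lt_or_gt_of_ne ?_
  intro he
  apply hab
  obtain ⟨a, i⟩ := a
  obtain ⟨b, j⟩ := b
  have he' := toLex.injective he
  simp only [Prod.mk.injEq] at he'
  obtain ⟨h1, h2⟩ := he'
  have hab' : a = b := by
    by_contra hne
    rcases h.2.1.2 a b hne with h3 | h3
    · have := predCount_arb h h3; omega
    · have := predCount_arb h h3; omega
  subst hab'
  cases i <;> cases j <;> simp at h1 ⊢ <;> omega

theorem splitKey_lt_of {a b : T × Bool}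
    (h : (if a.2 then 2 * predCount arb a.1 + 2 else 2 * predCount vis a.1 + 1) <
      (if b.2 then 2 * predCount arb b.1 + 2 else 2 * predCount vis b.1 + 1)) :
    splitKey vis arb a < splitKey vis arb b := by
  unfold splitKey
  rw [Prod.Lex.toLex_lt_toLex]
  exact Or.inl h

end Helpers

/-- Lemma 1, case SI: if a trace is SI then its split trace is SI. -/
theorem split_preserves_si {T X V : Type*} [Fintype T] (τ : TxnTrace T X V)
    (hwf : τ.WellFormed) (h : τ.IsSI) : τ.split.IsSI := by
  obtain ⟨vis, arb, hg, hpoco, hcoarb, hret, hpre, hconf⟩ := h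
  have hvt : ∀ v, v ≠ τ.t0 → vis τ.t0 v := fun v hv =>
    hpoco _ _ (.single (Or.inl (hwf.po_init v hv)))
  have harb_irr := hg.2.1.1.1
  have harb_tr := hg.2.1.1.2
  have hva := hg.2.2
  have hnt : ∀ v, ¬ arb v τ.t0 := by
    intro v hv
    by_cases hv0 : v = τ.t0
    · subst hv0; exact harb_irr _ hv
    · exact harb_irr _ (harb_tr _ _ _ hv (hva _ _ (hvt v hv0)))
  have hm0 : ∀ v, predCount vis τ.t0 ≤ predCount arb v := fun v =>
    predCount_not_vis hg hpre (fun hv => hnt v (hva _ _ hv))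
  have hW : ∀ u v, arb u v →
      splitKey vis arb (τ.wrPart u) < splitKey vis arb (τ.wrPart v) := by
    intro u v huv
    have hv : v ≠ τ.t0 := by rintro rfl; exact hnt u huv
    apply splitKey_lt_of
    have h1 := predCount_arb hg huv
    have h2 := hm0 v
    by_cases hu : u = τ.t0
    · subst hu; simp [TxnTrace.wrPart, hv]; omega
    · simp [TxnTrace.wrPart, hv, hu]; omega
  have hR : ∀ u v, vis u v →
      splitKey vis arb (τ.wrPart u) < splitKey vis arb (TxnTrace.rdPart v) := by
    intro u v huv
    apply splitKey_lt_of
    have h1 := predCount_vis hg hpre huv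
    have h2 := hm0 u
    by_cases hu : u = τ.t0
    · subst hu; simp [TxnTrace.wrPart, TxnTrace.rdPart]; omega
    · simp [TxnTrace.wrPart, TxnTrace.rdPart, hu]; omega
  have hRW : ∀ t, t ≠ τ.t0 →
      splitKey vis arb (TxnTrace.rdPart t) < splitKey vis arb (τ.wrPart t) := by
    intro t ht
    apply splitKey_lt_of
    have h1 := predCount_not_vis hg hpre (hg.1.1 t)
    simp [TxnTrace.wrPart, TxnTrace.rdPart, ht]; omega
  have hpo : ∀ a b, τ.split.po a b → splitKey vis arb a < splitKey vis arb b := by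
    intro a b hab
    change Relation.TransGen _ a b at hab
    have step : ∀ a b, ((∃ t, t ≠ τ.t0 ∧ a = TxnTrace.rdPart t ∧ b = τ.wrPart t) ∨
        (∃ u v, τ.po u v ∧ a = τ.wrPart u ∧ b = TxnTrace.rdPart v)) →
        splitKey vis arb a < splitKey vis arb b := by
      rintro a b (⟨t, ht, rfl, rfl⟩ | ⟨u, v, huv, rfl, rfl⟩)
      · exact hRW t ht
      · exact hR u v (hpoco _ _ (.single (Or.inl huv)))
    induction hab with
    | single h => exact step _ _ h
    | tail _ h ih => exact ih.trans (step _ _ h)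
  have hrf : ∀ a b, τ.split.rfR a b → splitKey vis arb a < splitKey vis arb b := by
    rintro a b ⟨x, u, v, huv, rfl, rfl⟩
    exact hR u v (hpoco _ _ (.single (Or.inr ⟨x, huv⟩)))
  have hsto : ∀ a b, τ.split.stoR a b → splitKey vis arb a < splitKey vis arb b := by
    rintro a b ⟨x, u, v, huv, rfl, rfl⟩
    exact hW u v (hva _ _ (hconf _ _ ⟨x, huv⟩))
  have htot := splitKey_total hg
  refine ⟨_, _, ⟨htot.1, htot, fun _ _ h => h⟩, ?_, ?_, ?_, htot.1.2, hsto⟩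
  · intro a b hab
    induction hab with
    | single h => exact h.elim (hpo _ _) (hrf _ _)
    | tail _ h ih => exact lt_trans ih (h.elim (hpo _ _) (hrf _ _))
  · intro a b hab
    have step : ∀ a b, τ.split.arb0 a b → splitKey vis arb a < splitKey vis arb b := by
      rintro a b (h | h | h)
      · exact hpo _ _ h
      · exact hrf _ _ h
      · exact hsto _ _ h
    induction hab with
    | single h => exact step _ _ h
    | tail _ h ih => exact lt_trans ih (step _ _ h)
  · rintro p x hx
    have hwr1 : ∀ t, (τ.wrPart t).1 = t := by
      intro t; unfold TxnTrace.wrPart; split_ifs <;> rfl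
    change x ∈ (if p = TxnTrace.rdPart p.1 then τ.RS p.1 else ∅) at hx
    split_ifs at hx with hp
    · obtain ⟨t, i⟩ := p
      rw [hp]
      simp only at hx ⊢
      obtain ⟨w, ⟨hw1, hw2⟩, hw3, hw4⟩ := hret t x hx
      refine ⟨τ.wrPart w, ⟨hR _ _ hw1, ?_⟩, ?_, ⟨w, t, hw4, rfl, rfl⟩⟩
      · change x ∈ (if τ.wrPart w = τ.wrPart (τ.wrPart w).1 then τ.WS (τ.wrPart w).1 else ∅)
        rw [hwr1, if_pos rfl]; exact hw2
      · rintro q hq1 hq2 hq3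
        change x ∈ (if q = τ.wrPart q.1 then τ.WS q.1 else ∅) at hq2
        split_ifs at hq2 with hq
        · rw [hq] at hq1 hq3 ⊢
          generalize q.1 = u at *
          apply hW
          refine hw3 u ?_ hq2 (by rintro rfl; exact hq3 rfl)
          have ht0 : t ≠ τ.t0 := by
            rintro rfl; rw [hwf.rs_init] at hx; exact hx
          by_contra hnv
          have hu : u ≠ τ.t0 := by rintro rfl; exact hnv (hvt t ht0)
          have h1 := predCount_not_vis hg hpre hnv
          refine lt_asymm hq1 (splitKey_lt_of ?_)
          simp [TxnTrace.wrPart, TxnTrace.rdPart, hu]; omega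
        · exact hq2.elim
    · exact hx.elim
end

section
/- A trace τ over (T,X,V) is CC if and only if its split trace τ_split is CC. (Lemma 3 of the paper.) -/
open scoped Classical

namespace TxnTrace

theorem wrPart_fst {T X V : Type*} (τ : TxnTrace T X V) (t : T) : (τ.wrPart t).1 = t := by
  unfold wrPart; split_ifs <;> rfl

theorem transGen_sub {α : Type*} {r s : α → α → Prop} (h : ∀ a b, r a b → s a b)
    (ht : ∀ a b c, s a b → s b c → s a c) : ∀ a b, Relation.TransGen r a b → s a b := by
  intro a b hab
  induction hab with
  | single h1 => exact h _ _ h1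
  | tail _ h2 ih => exact ht _ _ _ ih (h _ _ h2)

/-- lexicographic lift of a relation to the split transactions -/
def lexR {T : Type*} (r : T → T → Prop) (p q : T × Bool) : Prop :=
  r p.1 q.1 ∨ (p.1 = q.1 ∧ p.2 = false ∧ q.2 = true)

theorem lexR_spo {T : Type*} {r : T → T → Prop} (h : StrictPartialRel r) :
    StrictPartialRel (lexR r) := by
  obtain ⟨hi, ht⟩ := h
  refine ⟨?_, ?_⟩
  · rintro ⟨a, i⟩ (h | ⟨-, h1, h2⟩)
    · exact hi _ h
    · simp_all
  · rintro ⟨a, i⟩ ⟨b, j⟩ ⟨c, k⟩ (h | ⟨e, h1, h2⟩) (h' | ⟨e', h1', h2'⟩)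
    · exact Or.inl (ht _ _ _ h h')
    · dsimp only at *; subst e'; exact Or.inl h
    · dsimp only at *; subst e; exact Or.inl h'
    · simp_all

theorem split_of {T X V : Type*} (τ : TxnTrace T X V)
    (h : τ.IsCC) : τ.split.IsCC := by
  obtain ⟨vis, arb, ⟨hv, ha, hva⟩, hpo, hco, hret⟩ := h
  have hvl := lexR_spo hv
  have hal := lexR_spo ha.1
  have hsub : ∀ a b, lexR vis a b → lexR arb a b := fun a b h => h.imp (hva _ _) id
  have hpo' : ∀ a b, τ.split.po a b → lexR vis a b := by
    refine transGen_sub ?_ hvl.2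
    rintro a b (⟨t, ht, rfl, rfl⟩ | ⟨u, v, huv, rfl, rfl⟩)
    · right; simp [rdPart, wrPart, ht]
    · left; rw [wrPart_fst]; exact hpo _ _ (.single (Or.inl huv))
  have hrf' : ∀ a b, τ.split.rfR a b → lexR vis a b := by
    rintro a b ⟨x, u, v, huv, rfl, rfl⟩
    left; rw [wrPart_fst]; exact hpo _ _ (.single (Or.inr ⟨x, huv⟩))
  have hst' : ∀ a b, τ.split.stoR a b → lexR arb a b := by
    rintro a b ⟨x, u, v, huv, rfl, rfl⟩
    left; rw [wrPart_fst, wrPart_fst]; exact hco _ _ (.single (Or.inr (Or.inr ⟨x, huv⟩)))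
  refine ⟨lexR vis, lexR arb, ⟨hvl, ⟨hal, ?_⟩, hsub⟩, ?_, ?_, ?_⟩
  · rintro ⟨a, i⟩ ⟨b, j⟩ hne
    by_cases hab : a = b
    · subst hab
      cases i <;> cases j <;> simp_all [lexR]
    · exact (ha.2 a b hab).imp Or.inl Or.inl
  · refine transGen_sub ?_ hvl.2
    rintro a b (h | h)
    exacts [hpo' _ _ h, hrf' _ _ h]
  · refine transGen_sub ?_ hal.2
    rintro a b (h | h | h)
    exacts [hsub _ _ (hpo' _ _ h), hsub _ _ (hrf' _ _ h), hst' _ _ h]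
  · rintro ⟨t, i⟩ x hx
    cases i with
    | true => simp [split, rdPart] at hx
    | false =>
      have hx' : x ∈ τ.RS t := by simpa [split, rdPart] using hx
      obtain ⟨w, ⟨h1, h2⟩, h3, h4⟩ := hret t x hx'
      refine ⟨τ.wrPart w, ⟨Or.inl (by rwa [wrPart_fst]), ?_⟩, ?_, ⟨w, t, h4, rfl, rfl⟩⟩
      · simpa [split, wrPart_fst] using h2
      · rintro ⟨b, j⟩ (hb | ⟨_, _, hb⟩) hxb hne
        · by_cases e : (b, j) = τ.wrPart b
          · have hxb' : x ∈ τ.WS b := by simpa [split, if_pos e] using hxb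
            left; rw [wrPart_fst]
            refine h3 b hb hxb' ?_
            rintro rfl
            exact hne e
          · simp [split, if_neg e] at hxb
        · simp at hb

theorem of_split {T X V : Type*} (τ : TxnTrace T X V)
    (h : τ.split.IsCC) : τ.IsCC := by
  obtain ⟨vis, arb, ⟨hv, ha, hva⟩, hpo, hco, hret⟩ := h
  have hrw : ∀ t, rdPart t = τ.wrPart t ∨ vis (rdPart t) (τ.wrPart t) := by
    intro t
    by_cases ht : t = τ.t0
    · left; simp [rdPart, wrPart, ht]
    · right; exact hpo _ _ (.single (Or.inl (.single (Or.inl ⟨t, ht, rfl, rfl⟩))))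
  have hext : ∀ a b, vis a (rdPart b) → vis a (τ.wrPart b) := by
    intro a b h
    rcases hrw b with e | e
    · rwa [← e]
    · exact hv.2 _ _ _ h e
  have hvt : ∀ a b c, vis (τ.wrPart a) (rdPart b) → vis (τ.wrPart b) (rdPart c) →
      vis (τ.wrPart a) (rdPart c) := fun a b c h h' => hv.2 _ _ _ (hext _ _ h) h'
  have hv0 : ∀ a b, τ.vis0 a b → vis (τ.wrPart a) (rdPart b) := by
    rintro a b (h | ⟨x, h⟩)
    · exact hpo _ _ (.single (Or.inl (.single (Or.inr ⟨a, b, h, rfl, rfl⟩))))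
    · exact hpo _ _ (.single (Or.inr ⟨x, a, b, h, rfl, rfl⟩))
  have hsub : ∀ a b, vis (τ.wrPart a) (rdPart b) → arb (τ.wrPart a) (τ.wrPart b) :=
    fun a b h => hva _ _ (hext _ _ h)
  have hinj : ∀ a b, τ.wrPart a = τ.wrPart b → a = b := by
    intro a b h
    rw [← τ.wrPart_fst a, h, wrPart_fst]
  refine ⟨fun a b => vis (τ.wrPart a) (rdPart b), fun a b => arb (τ.wrPart a) (τ.wrPart b),
    ⟨⟨fun a h => hv.1 _ (hext _ _ h), hvt⟩, ⟨⟨fun a => ha.1.1 _, fun a b c => ha.1.2 _ _ _⟩,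
      fun a b hne => ha.2 _ _ fun h => hne (hinj _ _ h)⟩, hsub⟩, ?_, ?_, ?_⟩
  · exact transGen_sub hv0 hvt
  · refine transGen_sub ?_ fun a b c => ha.1.2 _ _ _
    rintro a b (h | h | ⟨x, h⟩)
    · exact hsub _ _ (hv0 _ _ (Or.inl h))
    · exact hsub _ _ (hv0 _ _ (Or.inr h))
    · exact hco _ _ (.single (Or.inr (Or.inr ⟨x, a, b, h, rfl, rfl⟩)))
  · intro t x hx
    obtain ⟨w, ⟨h1, h2⟩, h3, u, v, huv, rfl, e⟩ := hret (rdPart t) x (by simpa [split, rdPart] using hx)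
    have e' : t = v := congrArg Prod.fst e
    subst e'
    refine ⟨u, ⟨h1, by simpa [split, wrPart_fst] using h2⟩, ?_, huv⟩
    intro b hb hxb hne
    exact h3 _ hb (by simpa [split, wrPart_fst] using hxb) fun h => hne (hinj _ _ h)

end TxnTrace

/-- Lemma 3: a trace is CC iff its split trace is CC. -/
theorem cc_iff_split_cc {T X V : Type*} [Fintype T] (τ : TxnTrace T X V)
    (hwf : τ.WellFormed) : τ.IsCC ↔ τ.split.IsCC := by
  exact ⟨τ.split_of, τ.of_split⟩
end

section
/- A trace τ over (T,X,V) is PC if and only if its split trace τ_split is SER. (Lemma 4 of the paper.) -/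
open scoped Classical

namespace TxnTrace

theorem wrPart_inj {T X V : Type*} (τ : TxnTrace T X V) {s t : T}
    (h : τ.wrPart s = τ.wrPart t) : s = t := by
  rw [← τ.wrPart_fst s, h, τ.wrPart_fst]

theorem mem_split_WS {T X V : Type*} (τ : TxnTrace T X V) (p : T × Bool) (x : X) :
    x ∈ τ.split.WS p ↔ p = τ.wrPart p.1 ∧ x ∈ τ.WS p.1 := by
  simp only [split]; split_ifs with h
  · exact ⟨fun hx => ⟨h, hx⟩, fun hx => hx.2⟩
  · exact ⟨fun hx => absurd hx (Set.notMem_empty x), fun hx => absurd hx.1 h⟩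

theorem mem_split_WS_wr {T X V : Type*} (τ : TxnTrace T X V) (t : T) (x : X) :
    x ∈ τ.split.WS (τ.wrPart t) ↔ x ∈ τ.WS t := by
  rw [mem_split_WS, wrPart_fst]; simp

theorem mem_split_RS {T X V : Type*} (τ : TxnTrace T X V) (p : T × Bool) (x : X) :
    x ∈ τ.split.RS p ↔ p = rdPart p.1 ∧ x ∈ τ.RS p.1 := by
  simp only [split]; split_ifs with h
  · exact ⟨fun hx => ⟨h, hx⟩, fun hx => hx.2⟩
  · exact ⟨fun hx => absurd hx (Set.notMem_empty x), fun hx => absurd hx.1 h⟩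

theorem transGen_le {α : Type*} {r s : α → α → Prop}
    (htr : ∀ a b c, s a b → s b c → s a c) (h : ∀ a b, r a b → s a b) :
    ∀ a b, Relation.TransGen r a b → s a b := by
  intro a b hab
  induction hab with
  | single h1 => exact h _ _ h1
  | tail _ h1 ih => exact htr _ _ _ ih (h _ _ h1)

theorem ser_to_pc {T X V : Type*} (τ : TxnTrace T X V)
    (hwf : τ.WellFormed) (hs : τ.split.IsSER) : τ.IsPC := by
  obtain ⟨arb, ⟨⟨hirr, htr⟩, htot⟩, hco, hret⟩ := hs
  have hpo : ∀ u v, τ.po u v → arb (τ.wrPart u) (rdPart v) := fun u v h =>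
    hco _ _ (.single (Or.inl (.single (Or.inr ⟨u, v, h, rfl, rfl⟩))))
  have hrf : ∀ u v, τ.rfR u v → arb (τ.wrPart u) (rdPart v) := fun u v ⟨x, h⟩ =>
    hco _ _ (.single (Or.inr (Or.inl ⟨x, u, v, h, rfl, rfl⟩)))
  have hsto : ∀ u v, τ.stoR u v → arb (τ.wrPart u) (τ.wrPart v) := fun u v ⟨x, h⟩ =>
    hco _ _ (.single (Or.inr (Or.inr ⟨x, u, v, h, rfl, rfl⟩)))
  have hrw : ∀ t, rdPart t = τ.wrPart t ∨ arb (rdPart t) (τ.wrPart t) := by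
    intro t
    by_cases h : t = τ.t0
    · left; simp [rdPart, wrPart, h]
    · right
      exact hco _ _ (.single (Or.inl (.single (Or.inl ⟨t, h, rfl, rfl⟩))))
  have hva : ∀ u v, arb (τ.wrPart u) (rdPart v) → arb (τ.wrPart u) (τ.wrPart v) := by
    intro u v h
    rcases hrw v with h1 | h1
    · rwa [← h1]
    · exact htr _ _ _ h h1
  have hvv : ∀ u v w, arb (τ.wrPart u) (rdPart v) → arb (τ.wrPart v) (rdPart w) →
      arb (τ.wrPart u) (rdPart w) := fun u v w h1 h2 => htr _ _ _ (hva _ _ h1) h2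
  refine ⟨fun u v => arb (τ.wrPart u) (rdPart v), fun u v => arb (τ.wrPart u) (τ.wrPart v),
    ⟨⟨?_, hvv⟩, ⟨⟨fun a => hirr _, fun a b c => htr _ _ _⟩, ?_⟩, hva⟩, ?_, ?_, ?_, ?_⟩
  · exact fun a h => hirr _ (hva _ _ h)
  · exact fun a b hab => htot _ _ fun h => hab (τ.wrPart_inj h)
  · refine transGen_le hvv ?_
    rintro a b (h | h)
    · exact hpo _ _ h
    · exact hrf _ _ h
  · refine transGen_le (fun a b c => htr _ _ _) ?_
    rintro a b (h | h | h)
    · exact hva _ _ (hpo _ _ h)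
    · exact hva _ _ (hrf _ _ h)
    · exact hsto _ _ h
  · intro t x hx
    obtain ⟨p, ⟨h1, h2⟩, h3, u, v, h4, rfl, h5⟩ :=
      hret (rdPart t) x ((τ.mem_split_RS _ _).2 ⟨rfl, hx⟩)
    have : t = v := congrArg Prod.fst h5
    subst this
    refine ⟨u, ⟨h1, (τ.mem_split_WS_wr _ _).1 h2⟩, ?_, h4⟩
    intro t' ht' hx' hne
    exact h3 _ ht' ((τ.mem_split_WS_wr _ _).2 hx') fun h => hne (τ.wrPart_inj h)
  · exact fun a b c h1 h2 => htr _ _ _ h1 h2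

theorem pc_to_ser {T X V : Type*} [Fintype T] (τ : TxnTrace T X V)
    (hwf : τ.WellFormed) (hs : τ.IsPC) : τ.split.IsSER := by
  obtain ⟨vis, arb, ⟨⟨virr, vtr⟩, ⟨⟨airr, atr⟩, atot⟩, hva⟩, hpoco, hco, hret, hpre⟩ := hs
  -- rank of a transaction in `arb` and number of its `vis`-predecessors
  obtain ⟨r, hr⟩ : ∃ r : T → ℕ, ∀ u, r u = (Finset.univ.filter fun w => arb w u).card :=
    ⟨_, fun _ => rfl⟩
  obtain ⟨n, hn⟩ : ∃ n : T → ℕ, ∀ u, n u = (Finset.univ.filter fun w => vis w u).card :=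
    ⟨_, fun _ => rfl⟩
  have harb : ∀ u v, arb u v → r u < r v := by
    intro u v h
    rw [hr, hr]
    apply Finset.card_lt_card
    rw [Finset.ssubset_iff_of_subset]
    · exact ⟨u, by simp [h], by simp [airr]⟩
    · intro w hw
      simp only [Finset.mem_filter, Finset.mem_univ, true_and] at hw ⊢
      exact atr _ _ _ hw h
  have hvis : ∀ u v, vis u v → r u < n v := by
    intro u v h
    rw [hr, hn]
    apply Finset.card_lt_card
    rw [Finset.ssubset_iff_of_subset]
    · exact ⟨u, by simp [h], by simp [airr]⟩
    · intro w hw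
      simp only [Finset.mem_filter, Finset.mem_univ, true_and] at hw ⊢
      exact hpre _ _ _ hw h
  have hvis' : ∀ u v, r u < n v → vis u v := by
    intro u v h
    by_contra hv
    apply absurd h
    rw [hr, hn, not_lt]
    apply Finset.card_le_card
    intro w hw
    simp only [Finset.mem_filter, Finset.mem_univ, true_and] at hw ⊢
    have hne : u ≠ w := by rintro rfl; exact hv hw
    rcases atot _ _ hne with h1 | h1
    · exact absurd (hpre _ _ _ h1 hw) hv
    · exact h1
  have hnr : ∀ t, n t ≤ r t := by
    intro t
    rw [hr, hn]
    apply Finset.card_le_card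
    intro w hw
    simp only [Finset.mem_filter, Finset.mem_univ, true_and] at hw ⊢
    exact hva _ _ hw
  have rinj : ∀ u v, r u = r v → u = v := by
    intro u v h
    by_contra hne
    rcases atot _ _ hne with h1 | h1
    · have := harb _ _ h1; omega
    · have := harb _ _ h1; omega
  have hr0 : r τ.t0 = 0 := by
    rw [hr, Finset.card_eq_zero, Finset.filter_eq_empty_iff]
    intro w _ hw
    have hne : w ≠ τ.t0 := by rintro rfl; exact airr _ hw
    exact airr _ (atr _ _ _ hw (hco _ _ (.single (Or.inl (hwf.po_init _ hne)))))
  obtain ⟨a, ha⟩ : ∃ a : T × Bool → ℕ, ∀ t b, a (t, b) =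
      if t = τ.t0 then (if b = true then 0 else 1) else (if b = true then 2 * r t + 1 else 2 * n t) :=
    ⟨fun p => if p.1 = τ.t0 then (if p.2 = true then 0 else 1)
      else (if p.2 = true then 2 * r p.1 + 1 else 2 * n p.1), fun t b => rfl⟩
  have awr : ∀ t, a (τ.wrPart t) = 2 * r t + 1 := by
    intro t
    unfold wrPart
    split_ifs with h
    · rw [ha, if_pos h, h, hr0]; simp
    · rw [ha, if_neg h]; simp
  have ard : ∀ t, t ≠ τ.t0 → a (rdPart t) = 2 * n t := by
    intro t h
    rw [rdPart, ha, if_neg h]; simp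
  have vne : ∀ u v, vis u v → v ≠ τ.t0 := by
    rintro u v h rfl
    have := harb _ _ (hva _ _ h)
    omega
  have hwr : ∀ u v, vis u v → a (τ.wrPart u) < a (rdPart v) := by
    intro u v h
    rw [awr, ard _ (vne _ _ h)]
    have := hvis _ _ h
    omega
  have htrans : ∀ p q s : T × Bool, (a p < a q ∨ a p = a q ∧ r p.1 < r q.1) →
      (a q < a s ∨ a q = a s ∧ r q.1 < r s.1) → (a p < a s ∨ a p = a s ∧ r p.1 < r s.1) := by
    intro p q s h1 h2; omega
  refine ⟨fun p q => a p < a q ∨ a p = a q ∧ r p.1 < r q.1,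
    ⟨⟨fun p h => by omega, htrans⟩, ?_⟩, ?_, ?_⟩
  · rintro ⟨t, b⟩ ⟨s, c⟩ hne
    by_contra hcon
    have h1 : a (t, b) = a (s, c) := by omega
    have h2 : r t = r s := by
      by_contra h3
      apply hcon
      simp only
      omega
    have h3 := rinj _ _ h2
    subst h3
    apply hne
    rw [ha, ha] at h1
    by_cases h0 : t = τ.t0
    · cases b <;> cases c <;> simp [h0] at h1 ⊢
    · cases b <;> cases c <;> simp [h0] at h1 ⊢ <;> omega
  · refine transGen_le htrans ?_
    rintro p q (h | ⟨x, u, v, h, rfl, rfl⟩ | ⟨x, u, v, h, rfl, rfl⟩)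
    · revert p q
      refine transGen_le htrans ?_
      rintro p q (⟨t, h, rfl, rfl⟩ | ⟨u, v, h, rfl, rfl⟩)
      · left; rw [awr, ard _ h]; have := hnr t; omega
      · exact Or.inl (hwr _ _ (hpoco _ _ (.single (Or.inl h))))
    · exact Or.inl (hwr _ _ (hpoco _ _ (.single (Or.inr ⟨x, h⟩))))
    · left
      rw [awr, awr]
      have := harb _ _ (hco _ _ (.single (Or.inr (Or.inr ⟨x, h⟩))))
      omega
  · rintro ⟨t, b⟩ x hx
    obtain ⟨hp, hx⟩ := (τ.mem_split_RS _ _).1 hx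
    rw [hp]
    simp only at hx ⊢
    obtain ⟨u, ⟨h1, h2⟩, h3, h4⟩ := hret t x hx
    refine ⟨τ.wrPart u, ⟨Or.inl (hwr _ _ h1), (τ.mem_split_WS_wr _ _).2 h2⟩, ?_, u, t, h4, rfl, rfl⟩
    rintro ⟨w, c⟩ hw hxw hne
    obtain ⟨hq, hxw⟩ := (τ.mem_split_WS _ _).1 hxw
    rw [hq] at hw hne ⊢
    simp only at hw hne hxw ⊢
    left
    rw [awr, ard _ (vne _ _ h1)] at hw
    rw [awr, awr]
    have := harb _ _ (h3 w (hvis' _ _ (by omega)) hxw fun h => hne (by rw [h]))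
    omega

end TxnTrace

/-- Lemma 4: a trace is PC iff its split trace is SER. -/
theorem pc_iff_split_ser {T X V : Type*} [Fintype T] (τ : TxnTrace T X V)
    (hwf : τ.WellFormed) : τ.IsPC ↔ τ.split.IsSER :=
  ⟨τ.pc_to_ser hwf, τ.ser_to_pc hwf⟩
end

section
/- If a trace τ over (T,X,V) is PC, then the happens-before relation of its split trace τ_split, i.e. the transitive closure of po' ∪ rf' ∪ sto' ∪ cf', is irreflexive. (Content of the forward direction of Lemma 4: splitting transactions breaks every happens-before cycle of a PC trace.) -/
open scoped Classical

/-- a rank on the split events: write parts sit at their `arb`-position, read parts directly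
after the last write visible to them -/
noncomputable def splitRank {T X V : Type*} (τ : TxnTrace T X V) (vis arb : T → T → Prop)
    (p : T × Bool) : ℕ :=
  if p.2 = true ∨ p.1 = τ.t0 then 2 * {s | arb s p.1 ∨ s = p.1}.ncard
  else 2 * {s | vis s p.1}.ncard + 1

theorem splitRank_wr {T X V : Type*} (τ : TxnTrace T X V) (vis arb : T → T → Prop) (t : T) :
    splitRank τ vis arb (τ.wrPart t) = 2 * {s | arb s t ∨ s = t}.ncard := by
  unfold splitRank TxnTrace.wrPart
  by_cases h : t = τ.t0 <;> simp [h]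

theorem splitRank_rd {T X V : Type*} (τ : TxnTrace T X V) (vis arb : T → T → Prop) (t : T)
    (h : t ≠ τ.t0) :
    splitRank τ vis arb (TxnTrace.rdPart t) = 2 * {s | vis s t}.ncard + 1 := by
  simp [splitRank, TxnTrace.rdPart, h]

theorem wrPart_inj {T X V : Type*} (τ : TxnTrace T X V) {a b : T}
    (h : τ.wrPart a = τ.wrPart b) : a = b := by
  have h1 : ∀ t, (τ.wrPart t).1 = t := by
    intro t
    unfold TxnTrace.wrPart
    split_ifs <;> rfl
  rw [← h1 a, h, h1]

/-- forward direction of Lemma 4: if a trace is PC then the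
happens-before relation of its split trace is irreflexive. -/
theorem pc_split_hb_irrefl {T X V : Type*} [Fintype T] (τ : TxnTrace T X V)
    (hwf : τ.WellFormed) (h : τ.IsPC) : ∀ p, ¬ τ.split.hb p p := by
  obtain ⟨vis, arb, ⟨⟨vi, vt⟩, ⟨⟨ai, atp⟩, atot⟩, va⟩, hpo, hco, hrv, hpre⟩ := h
  have hpo0 : ∀ a b, τ.po a b → vis a b := fun a b h => hpo a b (.single (Or.inl h))
  have hrf0 : ∀ x a b, τ.rf x a b → vis a b := fun x a b h => hpo a b (.single (Or.inr ⟨x, h⟩))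
  have hsto0 : ∀ x a b, τ.sto x a b → arb a b :=
    fun x a b h => hco a b (.single (Or.inr (Or.inr ⟨x, h⟩)))
  have hv0 : ∀ a b, vis a b → b ≠ τ.t0 := by
    rintro a b h rfl
    by_cases ha : a = τ.t0
    · subst ha
      exact vi _ h
    · exact vi _ (vt _ _ _ h (hpo0 _ _ (hwf.po_init a ha)))
  -- write before read
  have wr_rd : ∀ u v, vis u v → splitRank τ vis arb (τ.wrPart u) <
      splitRank τ vis arb (TxnTrace.rdPart v) := by
    intro u v h
    rw [splitRank_wr, splitRank_rd _ _ _ _ (hv0 _ _ h)]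
    have : {s | arb s u ∨ s = u}.ncard ≤ {s | vis s v}.ncard := by
      apply Set.ncard_le_ncard _ (Set.toFinite _)
      rintro s (hs | rfl)
      · exact hpre _ _ _ hs h
      · exact h
    omega
  -- write before write
  have wr_wr : ∀ u v, arb u v → splitRank τ vis arb (τ.wrPart u) <
      splitRank τ vis arb (τ.wrPart v) := by
    intro u v h
    rw [splitRank_wr, splitRank_wr]
    have : {s | arb s u ∨ s = u}.ncard < {s | arb s v ∨ s = v}.ncard := by
      apply Set.ncard_lt_ncard _ (Set.toFinite _)
      refine ⟨?_, fun hsub => ?_⟩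
      · rintro s (hs | rfl)
        · exact Or.inl (atp _ _ _ hs h)
        · exact Or.inl h
      · rcases hsub (Or.inr rfl : arb v v ∨ v = v) with h2 | h2
        · exact ai _ (atp _ _ _ h h2)
        · subst h2
          exact ai _ h
    omega
  -- read before write
  have rd_wr : ∀ u v, u ≠ τ.t0 → ¬ vis v u → splitRank τ vis arb (TxnTrace.rdPart u) <
      splitRank τ vis arb (τ.wrPart v) := by
    intro u v hu h
    rw [splitRank_wr, splitRank_rd _ _ _ _ hu]
    have : {s | vis s u}.ncard < {s | arb s v ∨ s = v}.ncard := by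
      apply Set.ncard_lt_ncard _ (Set.toFinite _)
      refine ⟨?_, fun hsub => ?_⟩
      · intro s hs
        by_cases hsv : s = v
        · exact Or.inr hsv
        · rcases atot s v hsv with h2 | h2
          · exact Or.inl h2
          · exact absurd (hpre _ _ _ h2 hs) h
      · exact h (hsub (Or.inr rfl : arb v v ∨ v = v))
    omega
  have key : ∀ p q, τ.split.hb p q → splitRank τ vis arb p < splitRank τ vis arb q := by
    have step : ∀ p q, (τ.split.arb0 p q ∨ τ.split.cf p q) →
        splitRank τ vis arb p < splitRank τ vis arb q := by
      rintro p q ((h | ⟨x, u, v, h, rfl, rfl⟩ | ⟨x, u, v, h, rfl, rfl⟩) |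
        ⟨-, x, w, ⟨u, v, h, hw, rfl⟩, ⟨up, vp, h2p, hwp, rfl⟩⟩)
      · have base : ∀ a b, ((∃ t, t ≠ τ.t0 ∧ a = TxnTrace.rdPart t ∧ b = τ.wrPart t) ∨
            (∃ u v, τ.po u v ∧ a = τ.wrPart u ∧ b = TxnTrace.rdPart v)) →
            splitRank τ vis arb a < splitRank τ vis arb b := by
          rintro a b (⟨t, ht, rfl, rfl⟩ | ⟨u, v, h, rfl, rfl⟩)
          · exact rd_wr _ _ ht (vi t)
          · exact wr_rd _ _ (hpo0 _ _ h)
        change Relation.TransGen _ p q at h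
        induction h with
        | single h => exact base _ _ h
        | tail _ h ih => exact ih.trans (base _ _ h)
      · exact wr_rd _ _ (hrf0 _ _ _ h)
      · exact wr_wr _ _ (hsto0 _ _ _ h)
      · have huu : u = up := wrPart_inj τ (hw.symm.trans hwp)
        subst huu
        apply rd_wr _ _ (hv0 _ _ (hrf0 _ _ _ h))
        intro hvis
        have hx := (hwf.rf_wf _ _ _ h).2.1
        obtain ⟨t00, -, hmax, hr⟩ := hrv v x hx
        have ht : t00 = u := (hwf.rf_total v x hx).unique hr h
        subst ht
        have hne : vp ≠ t00 := by
          rintro rfl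
          exact hwf.sto_irrefl _ _ h2p
        exact ai _ (atp _ _ _ (hmax vp hvis (hwf.sto_dom _ _ _ h2p).2 hne) (hsto0 _ _ _ h2p))
    intro p q h
    change Relation.TransGen _ p q at h
    induction h with
    | single h => exact step _ _ h
    | tail _ h ih => exact ih.trans (step _ _ h)
  exact fun p h => lt_irrefl _ (key p p h)
end

section
/- Let τ be a trace over (T,X,V) that is PC and such that the transitive closure of (po ∪ rf ∪ sto) ∪ ((po ∪ rf ∪ sto) ; cf) is irreflexive (equivalently: every happens-before cycle of τ contains two successive cf dependencies). Then τ is SI. (Lemma 5 of the paper.) -/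
open scoped Classical

/-- Lemma 5: a PC trace all of whose happens-before cycles contain
two successive `cf` dependencies (i.e. `((po ∪ rf ∪ sto) ∪ (po ∪ rf ∪ sto);cf)⁺`
is irreflexive) is SI. -/
theorem pc_no_bad_cycle_imp_si {T X V : Type*} [Fintype T] (τ : TxnTrace T X V)
    (hwf : τ.WellFormed) (hpc : τ.IsPC)
    (hcyc : ∀ t, ¬ Relation.TransGen
      (fun a b => τ.arb0 a b ∨ ∃ c, τ.arb0 a c ∧ τ.cf c b) t t) :
    τ.IsSI := by
  classical
  set R : T → T → Prop := fun a b => τ.arb0 a b ∨ ∃ c, τ.arb0 a c ∧ τ.cf c b with hR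
  have hpo : IsPartialOrder T (Relation.ReflTransGen R) :=
    { refl := fun a => Relation.ReflTransGen.refl
      trans := fun a b c h1 h2 => h1.trans h2
      antisymm := by
        intro a b h1 h2
        rcases Relation.reflTransGen_iff_eq_or_transGen.1 h1 with h | h
        · exact h.symm
        · exact absurd (h.trans_left h2) (hcyc a) }
  obtain ⟨s, hs, hle⟩ := extend_partialOrder (Relation.ReflTransGen R)
  have srefl : ∀ a, s a a := fun a => hs.refl a
  have strans : ∀ a b c, s a b → s b c → s a c := fun a b c => hs.trans a b c
  have santi : ∀ a b, s a b → s b a → a = b := fun a b => hs.antisymm a b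
  have stot : ∀ a b, s a b ∨ s b a := fun a b => hs.total a b
  have hRs : ∀ a b, R a b → s a b ∧ a ≠ b := by
    intro a b h
    refine ⟨hle a b (Relation.ReflTransGen.single h), ?_⟩
    rintro rfl
    exact hcyc a (Relation.TransGen.single h)
  have h0 : ∀ a b, τ.arb0 a b → s a b ∧ a ≠ b := fun a b h => hRs a b (Or.inl h)
  -- arb is the strict part of `s`; vis is `arb* ; arb0`
  have visarb : ∀ a c, (∃ b, s a b ∧ τ.arb0 b c) → s a c ∧ a ≠ c := by
    rintro a c ⟨b, hab, hbc⟩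
    obtain ⟨h1, h2⟩ := h0 b c hbc
    refine ⟨strans _ _ _ hab h1, ?_⟩
    rintro rfl
    exact h2 (santi _ _ h1 hab)
  have arbtrans : ∀ a b c, (s a b ∧ a ≠ b) → (s b c ∧ b ≠ c) → (s a c ∧ a ≠ c) := by
    rintro a b c ⟨h1, h2⟩ ⟨h3, h4⟩
    refine ⟨strans _ _ _ h1 h3, ?_⟩
    rintro rfl
    exact h2 (santi _ _ h1 h3)
  have vtrans : ∀ a b c, (∃ d, s a d ∧ τ.arb0 d b) → (∃ d, s b d ∧ τ.arb0 d c) →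
      ∃ d, s a d ∧ τ.arb0 d c := by
    rintro a b c h1 ⟨d, h3, h4⟩
    exact ⟨d, strans _ _ _ (visarb a b h1).1 h3, h4⟩
  refine ⟨fun a c => ∃ b, s a b ∧ τ.arb0 b c, fun a b => s a b ∧ a ≠ b,
    ⟨⟨fun a h => (visarb a a h).2 rfl, vtrans⟩, ⟨⟨fun a h => h.2 rfl, arbtrans⟩, ?_⟩, visarb⟩,
    ?_, ?_, ?_, ?_, ?_⟩
  · intro a b hab
    rcases stot a b with h | h
    · exact Or.inl ⟨h, hab⟩
    · exact Or.inr ⟨h, hab.symm⟩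
  · have key : ∀ a b, τ.vis0 a b → ∃ d, s a d ∧ τ.arb0 d b := by
      intro a b h
      refine ⟨a, srefl a, ?_⟩
      rcases h with h | h
      · exact Or.inl h
      · exact Or.inr (Or.inl h)
    intro a b h
    induction h with
    | single h => exact key _ _ h
    | tail _ h ih => exact vtrans _ _ _ ih (key _ _ h)
  · intro a b h
    induction h with
    | single h => exact h0 _ _ h
    | tail _ h ih => exact arbtrans _ _ _ ih (h0 _ _ h)
  · intro t x hx
    obtain ⟨w, hw, -⟩ := hwf.rf_total t x hx
    have hwx := (hwf.rf_wf x w t hw).2.2.1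
    refine ⟨w, ⟨⟨w, srefl w, Or.inr (Or.inl ⟨x, hw⟩)⟩, hwx⟩, ?_, hw⟩
    rintro t' hv hx' hne
    rcases hwf.sto_total x t' w hx' hwx hne with h | h
    · exact h0 _ _ (Or.inr (Or.inr ⟨x, h⟩))
    · exfalso
      have hne' := (visarb _ _ hv).2
      obtain ⟨b, hb, hbt⟩ := hv
      obtain ⟨h1, h2⟩ := hRs b t' (Or.inr ⟨t, hbt, hne'.symm, x, w, hw, h⟩)
      exact h2 (santi _ _ h1 hb)
  · rintro a b c ⟨hab, -⟩ ⟨d, h1, h2⟩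
    exact ⟨d, strans _ _ _ hab h1, h2⟩
  · intro a b h
    exact ⟨a, srefl a, Or.inr (Or.inr h)⟩
end

section
/- If a trace τ over (T,X,V) is SI, then the transitive closure of (po ∪ rf ∪ sto) ∪ ((po ∪ rf ∪ sto) ; cf) is irreflexive (equivalently: every happens-before cycle of τ contains two successive cf dependencies). (Lemma 6 of the paper.) -/
open scoped Classical

/-- Lemma 6: in an SI trace, every happens-before cycle contains
two successive `cf` dependencies, i.e. `((po ∪ rf ∪ sto) ∪ (po ∪ rf ∪ sto);cf)⁺`
is irreflexive. -/
theorem si_no_bad_cycle {T X V : Type*} [Fintype T] (τ : TxnTrace T X V)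
    (hwf : τ.WellFormed) (hsi : τ.IsSI) :
    ∀ t, ¬ Relation.TransGen
      (fun a b => τ.arb0 a b ∨ ∃ c, τ.arb0 a c ∧ τ.cf c b) t t := by
  obtain ⟨vis, arb, ⟨⟨hvi, hvt⟩, ⟨⟨hai, hat⟩, htot⟩, hva⟩, hpo, hco, hret, hpre, hcon⟩ := hsi
  have h0 : ∀ a b, τ.arb0 a b → vis a b := by
    rintro a b (h | h | h)
    · exact hpo _ _ (.single (Or.inl h))
    · exact hpo _ _ (.single (Or.inr h))
    · exact hcon _ _ h
  have hcf : ∀ c b, τ.cf c b → ¬ vis b c := by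
    rintro c b ⟨_, x, w, hrf, hsto⟩ hv
    have hx := (hwf.rf_wf _ _ _ hrf).2.1
    obtain ⟨w', _, hmax, hrf'⟩ := hret c x hx
    have hw : w' = w := (hwf.rf_total c x hx).unique hrf' hrf
    subst hw
    have hne : b ≠ w' := by
      rintro rfl
      exact hwf.sto_irrefl _ _ hsto
    exact hai _ (hat _ _ _ (hmax b hv (hwf.sto_dom _ _ _ hsto).2 hne)
      (hva _ _ (hcon _ _ ⟨x, hsto⟩)))
  have hstep : ∀ a b, (τ.arb0 a b ∨ ∃ c, τ.arb0 a c ∧ τ.cf c b) → arb a b := by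
    rintro a b (h | ⟨c, hac, hcb⟩)
    · exact hva _ _ (h0 _ _ h)
    · have hv := h0 _ _ hac
      have hn := hcf _ _ hcb
      have hne : a ≠ b := by
        rintro rfl
        exact hn hv
      rcases htot a b hne with h | h
      · exact h
      · exact absurd (hpre _ _ _ h hv) hn
  have key : ∀ a b, Relation.TransGen
      (fun a b => τ.arb0 a b ∨ ∃ c, τ.arb0 a c ∧ τ.cf c b) a b → arb a b := by
    intro a b h
    induction h with
    | single h => exact hstep _ _ h
    | tail _ h ih => exact hat _ _ _ ih (hstep _ _ h)
  exact fun t ht => hai t (key t t ht)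
end

section
/- A PC trace is SI if and only if every happens-before cycle contains two successive cf dependencies: for a trace τ over (T,X,V) that is PC, τ is SI if and only if the transitive closure of (po ∪ rf ∪ sto) ∪ ((po ∪ rf ∪ sto) ; cf) is irreflexive. (Trace-level content of Theorem 2 of the paper.) -/
open scoped Classical

/-- an acyclic relation extends to a strict total order -/
theorem exists_total_ext {α : Type*} (R : α → α → Prop)
    (h : ∀ t, ¬ Relation.TransGen R t t) :
    ∃ arb : α → α → Prop, (∀ a, ¬ arb a a) ∧ (∀ a b c, arb a b → arb b c → arb a c) ∧
      (∀ a b, a ≠ b → arb a b ∨ arb b a) ∧ ∀ a b, R a b → arb a b := by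
  let P : PartialOrder α :=
    { le := Relation.ReflTransGen R
      le_refl := fun _ => .refl
      le_trans := fun _ _ _ h1 h2 => h1.trans h2
      le_antisymm := by
        intro a b h1 h2
        rcases Relation.reflTransGen_iff_eq_or_transGen.1 h1 with h3 | h3
        · exact h3.symm
        · exact absurd (h3.trans_left h2) (h a) }
  refine ⟨fun a b => toLinearExtension a < toLinearExtension b, fun a => lt_irrefl _,
    fun a b c h1 h2 => lt_trans h1 h2, fun a b hab => lt_or_gt_of_ne hab, ?_⟩
  intro a b hab
  refine lt_of_le_of_ne (toLinearExtension.monotone (Relation.ReflTransGen.single hab)) ?_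
  intro he
  have : a = b := he
  subst this
  exact h a (.single hab)

/-- trace-level content of Theorem 2: a PC trace is SI iff
`((po ∪ rf ∪ sto) ∪ (po ∪ rf ∪ sto);cf)⁺` is irreflexive. -/
theorem pc_si_iff_no_bad_cycle {T X V : Type*} [Fintype T] (τ : TxnTrace T X V)
    (hwf : τ.WellFormed) (hpc : τ.IsPC) :
    τ.IsSI ↔
      ∀ t, ¬ Relation.TransGen
        (fun a b => τ.arb0 a b ∨ ∃ c, τ.arb0 a c ∧ τ.cf c b) t t := by
  constructor
  · rintro ⟨vis, arb, ⟨⟨_, _⟩, ⟨⟨airr, atr⟩, atot⟩, hva⟩, hpo, hco, hret, hpre, hconf⟩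
    have hD : ∀ a b, τ.arb0 a b → vis a b := by
      rintro a b (h | h | h)
      · exact hpo _ _ (.single (Or.inl h))
      · exact hpo _ _ (.single (Or.inr h))
      · exact hconf _ _ h
    have hcf : ∀ c b, τ.cf c b → ¬ vis b c := by
      rintro c b ⟨_, x, w, hrf, hsto⟩ hv
      obtain ⟨w', _, hmax, hrf'⟩ := hret c x (hwf.rf_wf _ _ _ hrf).2.1
      have hw : w' = w := (hwf.rf_total c x (hwf.rf_wf _ _ _ hrf).2.1).unique hrf' hrf
      subst hw
      have hne : b ≠ w' := by
        rintro rfl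
        exact hwf.sto_irrefl _ _ hsto
      have h1 := hmax b hv (hwf.sto_dom _ _ _ hsto).2 hne
      have h2 : arb w' b := hco _ _ (.single (Or.inr (Or.inr ⟨x, hsto⟩)))
      exact airr _ (atr _ _ _ h1 h2)
    have hR : ∀ a b, (τ.arb0 a b ∨ ∃ c, τ.arb0 a c ∧ τ.cf c b) → arb a b := by
      rintro a b (h | ⟨c, h, hc⟩)
      · exact hva _ _ (hD _ _ h)
      · by_cases hab : a = b
        · subst hab
          exact absurd (hD _ _ h) (hcf _ _ hc)
        · rcases atot a b hab with h1 | h1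
          · exact h1
          · exact absurd (hpre _ _ _ h1 (hD _ _ h)) (hcf _ _ hc)
    intro t ht
    have : ∀ b, Relation.TransGen
        (fun a b => τ.arb0 a b ∨ ∃ c, τ.arb0 a c ∧ τ.cf c b) t b → arb t b := by
      intro b hb
      induction hb with
      | single h => exact hR _ _ h
      | tail _ h ih => exact atr _ _ _ ih (hR _ _ h)
    exact airr _ (this t ht)
  · intro hac
    obtain ⟨arb, airr, atr, atot, hR⟩ := exists_total_ext _ hac
    have hDa : ∀ a b, τ.arb0 a b → arb a b := fun a b h => hR _ _ (Or.inl h)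
    have hva : ∀ a c, (∃ b, (a = b ∨ arb a b) ∧ τ.arb0 b c) → arb a c := by
      rintro a c ⟨b, rfl | h, hd⟩
      · exact hDa _ _ hd
      · exact atr _ _ _ h (hDa _ _ hd)
    have hpre : ∀ a b c, arb a b → (∃ d, (b = d ∨ arb b d) ∧ τ.arb0 d c) →
        (∃ d, (a = d ∨ arb a d) ∧ τ.arb0 d c) := by
      rintro a b c hab ⟨d, rfl | h, hd⟩
      · exact ⟨_, Or.inr hab, hd⟩
      · exact ⟨d, Or.inr (atr _ _ _ hab h), hd⟩
    refine ⟨fun a c => ∃ b, (a = b ∨ arb a b) ∧ τ.arb0 b c, arb,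
      ⟨⟨fun a h => airr _ (hva _ _ h), fun a b c h1 h2 => hpre _ _ _ (hva _ _ h1) h2⟩,
        ⟨⟨airr, atr⟩, atot⟩, hva⟩, ?_, ?_, ?_, hpre, ?_⟩
    · intro a b h
      have hv : ∀ a b, τ.vis0 a b → τ.arb0 a b := by
        rintro a b (h | h)
        · exact Or.inl h
        · exact Or.inr (Or.inl h)
      induction h with
      | single h => exact ⟨a, Or.inl rfl, hv _ _ h⟩
      | tail _ h ih => exact ⟨_, Or.inr (hva _ _ ih), hv _ _ h⟩
    · intro a b h
      induction h with
      | single h => exact hDa _ _ h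
      | tail _ h ih => exact atr _ _ _ ih (hDa _ _ h)
    · intro t x hx
      obtain ⟨w, hrf, _⟩ := hwf.rf_total t x hx
      have hww := (hwf.rf_wf _ _ _ hrf).2.2.1
      refine ⟨w, ⟨⟨w, Or.inl rfl, Or.inr (Or.inl ⟨x, hrf⟩)⟩, hww⟩, ?_, hrf⟩
      intro t' hv hw' hne
      rcases hwf.sto_total x t' w hw' hww hne with h | h
      · exact hDa _ _ (Or.inr (Or.inr ⟨x, h⟩))
      · exfalso
        have htt : t ≠ t' := by
          rintro rfl
          exact airr _ (hva _ _ hv)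
        obtain ⟨b, hb, hd⟩ := hv
        have h1 : arb b t' := hR _ _ (Or.inr ⟨t, hd, htt, x, w, hrf, h⟩)
        rcases hb with rfl | hb
        · exact airr _ h1
        · exact airr _ (atr _ _ _ h1 hb)
    · intro a b h
      exact ⟨a, Or.inl rfl, Or.inr (Or.inr h)⟩
end

section
/- If a trace τ over (T,X,V) is PC, then the transitive closure of (po ∪ rf ∪ sto) ∪ ((po ∪ rf) ; cf) is irreflexive (equivalently: every happens-before cycle of τ contains either two successive cf dependencies or a sto dependency immediately followed by a cf dependency). (Lemma 7 of the paper.) -/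
open scoped Classical

/-- Lemma 7: in a PC trace, every happens-before cycle contains
either two successive `cf` dependencies or a `sto` dependency immediately
followed by a `cf` dependency, i.e. `((po ∪ rf ∪ sto) ∪ (po ∪ rf);cf)⁺` is
irreflexive. -/
theorem pc_cycle_shape {T X V : Type*} [Fintype T] (τ : TxnTrace T X V)
    (hwf : τ.WellFormed) (hpc : τ.IsPC) :
    ∀ t, ¬ Relation.TransGen
      (fun a b => τ.arb0 a b ∨ ∃ c, τ.vis0 a c ∧ τ.cf c b) t t := by
  obtain ⟨vis, arb, ⟨_, ⟨⟨airr, atr⟩, atot⟩, _⟩, hpo, hco, hret, hpre⟩ := hpc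
  have key : ∀ a b, Relation.TransGen
      (fun a b => τ.arb0 a b ∨ ∃ c, τ.vis0 a c ∧ τ.cf c b) a b → arb a b := by
    have step : ∀ a b, (τ.arb0 a b ∨ ∃ c, τ.vis0 a c ∧ τ.cf c b) → arb a b := by
      rintro a b (h | ⟨c, hac, _, x, w, hrf, hsto⟩)
      · exact hco a b (Relation.TransGen.single h)
      · by_contra hab
        have hv : vis a c := hpo a c (Relation.TransGen.single hac)
        have hbc : vis b c := by
          by_cases e : a = b
          · exact e ▸ hv
          · exact hpre b a c ((atot a b e).resolve_left hab) hv
        have hx := (hwf.rf_wf x w c hrf).2.1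
        obtain ⟨t00, _, hmax, hrf'⟩ := hret c x hx
        have hw : t00 = w := (hwf.rf_total c x hx).unique hrf' hrf
        subst hw
        have hne : b ≠ t00 := by
          rintro rfl
          exact hwf.sto_irrefl x _ hsto
        have h1 := hmax b hbc (hwf.sto_dom x _ _ hsto).2 hne
        have h2 : arb t00 b := hco _ _ (Relation.TransGen.single (Or.inr (Or.inr ⟨x, hsto⟩)))
        exact airr _ (atr _ _ _ h1 h2)
    intro a b h
    induction h with
    | single h => exact step _ _ h
    | tail _ h ih => exact atr _ _ _ ih (step _ _ h)
  intro t h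
  exact airr t (key t t h)
end

section
/- A trace τ over (T,X,V) is PC but not SI if and only if its split trace τ_split is SER and there exists a transaction t with (t,t) ∈ R* ; sto ; cf, where R = (po ∪ rf ∪ sto) ∪ ((po ∪ rf ∪ sto) ; cf) and R* is its reflexive-transitive closure (equivalently: τ has a happens-before cycle that contains a sto dependency immediately followed by a cf dependency and contains no two successive cf dependencies). (Trace-level content of Theorem 4 of the paper.) -/
open scoped Classical

namespace PcSi

open Relation

lemma exists_total_of_rank {α : Type*} (g : α → ℕ) :
    ∃ arb : α → α → Prop, StrictTotalRel arb ∧ ∀ a b, g a < g b → arb a b := by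
  refine ⟨fun a b => g a < g b ∨ (g a = g b ∧ WellOrderingRel a b), ⟨⟨?_, ?_⟩, ?_⟩, ?_⟩
  · rintro a (h | ⟨_, h⟩)
    · exact lt_irrefl _ h
    · exact irrefl_of WellOrderingRel a h
  · rintro a b c (h | ⟨h, h'⟩) (k | ⟨k, k'⟩)
    · left; omega
    · left; omega
    · left; omega
    · exact Or.inr ⟨h.trans k, trans_of WellOrderingRel h' k'⟩
  · intro a b hab
    rcases lt_trichotomy (g a) (g b) with h | h | h
    · exact Or.inl (Or.inl h)
    · rcases trichotomous_of WellOrderingRel a b with k | k | k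
      · exact Or.inl (Or.inr ⟨h, k⟩)
      · exact absurd k hab
      · exact Or.inr (Or.inr ⟨h.symm, k⟩)
    · exact Or.inr (Or.inl h)
  · intro a b h; exact Or.inl h

lemma exists_rank {α : Type*} [Fintype α] (Q : α → α → Prop)
    (h : ∀ a, ¬ TransGen Q a a) : ∃ r : α → ℕ, ∀ a b, Q a b → r a < r b := by
  refine ⟨fun t => (Finset.univ.filter (fun s => TransGen Q s t)).card, ?_⟩
  intro a b hab
  apply Finset.card_lt_card
  rw [Finset.ssubset_iff_of_subset]
  · exact ⟨a, by simp [TransGen.single hab], by simp [h a]⟩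
  · intro s hs
    simp only [Finset.mem_filter, Finset.mem_univ, true_and] at hs ⊢
    exact hs.tail hab

variable {T X V : Type*} {τ : TxnTrace T X V}

/-- `arb0 ∪ (W ; cf)` -/
def Q (τ : TxnTrace T X V) (W : T → T → Prop) (p q : T) : Prop :=
  τ.arb0 p q ∨ ∃ c, W p c ∧ τ.cf c q

lemma transGen_le {α : Type*} {r s : α → α → Prop} (ht : ∀ a b c, s a b → s b c → s a c)
    (h : ∀ a b, r a b → s a b) {a b : α} (hab : TransGen r a b) : s a b := by
  induction hab with
  | single h1 => exact h _ _ h1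
  | tail _ h1 ih => exact ht _ _ _ ih (h _ _ h1)

lemma acyclic_of (hwf : τ.WellFormed) {W vis arb : T → T → Prop} (hg : GoodPair vis arb)
    (hW : ∀ a b, W a b → vis a b) (hc : τ.CoArb arb) (hr : τ.RetVal vis arb)
    (hp : PrefixAx vis arb) (a : T) : ¬ TransGen (Q τ W) a a := by
  obtain ⟨-, ⟨⟨hi, ht⟩, htot⟩, -⟩ := hg
  intro h
  refine hi a (transGen_le ht ?_ h)
  rintro p q (h | ⟨c, hpc, hne, x, w, hrf, hsto⟩)
  · exact hc _ _ (.single h)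
  · have key : ¬ vis q c := by
      intro hv
      obtain ⟨t, -, hmax, hrf'⟩ := hr c x (hwf.rf_wf _ _ _ hrf).2.1
      have : t = w := (hwf.rf_total c x (hwf.rf_wf _ _ _ hrf).2.1).unique hrf' hrf
      subst this
      have hqw := hmax q hv (hwf.sto_dom _ _ _ hsto).2
        (fun e => hwf.sto_irrefl x q (by rw [e] at hsto ⊢; exact hsto))
      exact hi _ (ht _ _ _ hqw (hc _ _ (.single (Or.inr (Or.inr ⟨x, hsto⟩)))))
    have hpq : p ≠ q := fun e => key (e ▸ hW _ _ hpc)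
    rcases htot p q hpq with h | h
    · exact h
    · exact absurd (hp _ _ _ h (hW _ _ hpc)) key

lemma of_acyclic [Fintype T] (hwf : τ.WellFormed) {W : T → T → Prop}
    (hv : ∀ a b, τ.vis0 a b → W a b) (hA : ∀ a b, W a b → τ.arb0 a b)
    (h : ∀ a, ¬ TransGen (Q τ W) a a) :
    ∃ vis arb, GoodPair vis arb ∧ τ.PoCo vis ∧ τ.CoArb arb ∧ τ.RetVal vis arb ∧
      PrefixAx vis arb ∧ ∀ a b, W a b → vis a b := by
  obtain ⟨r, hr⟩ := exists_rank _ h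
  obtain ⟨arb, harb, hext⟩ := exists_total_of_rank r
  have hQ : ∀ a b, Q τ W a b → arb a b := fun a b k => hext _ _ (hr _ _ k)
  have hWa : ∀ a b, W a b → arb a b := fun a b k => hQ _ _ (Or.inl (hA _ _ k))
  obtain ⟨⟨hi, ht⟩, htot⟩ := harb
  have hva : ∀ a b, (∃ c, (a = c ∨ arb a c) ∧ W c b) → arb a b := by
    rintro a b ⟨c, rfl | h1, h2⟩
    · exact hWa _ _ h2
    · exact ht _ _ _ h1 (hWa _ _ h2)
  have hpre : ∀ a b d, arb a b → (∃ c, (b = c ∨ arb b c) ∧ W c d) →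
      (∃ c, (a = c ∨ arb a c) ∧ W c d) := by
    rintro a b d hab ⟨c, rfl | h1, h2⟩
    · exact ⟨b, Or.inr hab, h2⟩
    · exact ⟨c, Or.inr (ht _ _ _ hab h1), h2⟩
  have hvt : ∀ a b d, (∃ c, (a = c ∨ arb a c) ∧ W c b) → (∃ c, (b = c ∨ arb b c) ∧ W c d) →
      (∃ c, (a = c ∨ arb a c) ∧ W c d) := fun a b d h1 h2 => hpre _ _ _ (hva _ _ h1) h2
  refine ⟨fun a b => ∃ c, (a = c ∨ arb a c) ∧ W c b, arb,
    ⟨⟨fun a k => hi a (hva _ _ k), hvt⟩, ⟨⟨hi, ht⟩, htot⟩, hva⟩, ?_, ?_, ?_, hpre, ?_⟩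
  · intro a b k
    exact transGen_le (s := fun a b => ∃ c, (a = c ∨ arb a c) ∧ W c b) hvt
      (fun a b k => ⟨a, Or.inl rfl, hv _ _ k⟩) k
  · intro a b k
    exact transGen_le ht (fun a b k => hQ _ _ (Or.inl k)) k
  · intro t x hx
    obtain ⟨w, hw, -⟩ := hwf.rf_total t x hx
    have hwx := (hwf.rf_wf _ _ _ hw).2.2.1
    refine ⟨w, ⟨⟨w, Or.inl rfl, hv _ _ (Or.inr ⟨x, hw⟩)⟩, hwx⟩, ?_, hw⟩
    intro t' hvis hx' hne
    rcases hwf.sto_total x t' w hx' hwx hne with k | k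
    · exact hQ _ _ (Or.inl (Or.inr (Or.inr ⟨x, k⟩)))
    · exfalso
      have hne' : t ≠ t' := by
        rintro rfl; exact hi _ (hva _ _ hvis)
      obtain ⟨c, h1, h2⟩ := hvis
      have h3 : arb c t' := hQ _ _ (Or.inr ⟨t, h2, hne', x, w, hw, k⟩)
      rcases h1 with rfl | h1
      · exact hi _ h3
      · exact hi _ (ht _ _ _ h1 h3)
  · intro a b k; exact ⟨a, Or.inl rfl, k⟩

lemma pc_iff [Fintype T] (hwf : τ.WellFormed) :
    τ.IsPC ↔ ∀ a, ¬ TransGen (Q τ τ.vis0) a a := by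
  constructor
  · rintro ⟨vis, arb, hg, h1, h2, h3, h4⟩
    exact acyclic_of hwf hg (fun a b k => h1 _ _ (.single k)) h2 h3 h4
  · intro h
    obtain ⟨vis, arb, hg, h1, h2, h3, h4, -⟩ := of_acyclic hwf (W := τ.vis0) (fun _ _ k => k)
      (fun a b k => by rcases k with k | k; exacts [Or.inl k, Or.inr (Or.inl k)]) h
    exact ⟨vis, arb, hg, h1, h2, h3, h4⟩

lemma si_iff [Fintype T] (hwf : τ.WellFormed) :
    τ.IsSI ↔ ∀ a, ¬ TransGen (Q τ τ.arb0) a a := by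
  constructor
  · rintro ⟨vis, arb, hg, h1, h2, h3, h4, h5⟩
    refine acyclic_of hwf hg ?_ h2 h3 h4
    rintro a b (k | k | k)
    · exact h1 _ _ (.single (Or.inl k))
    · exact h1 _ _ (.single (Or.inr k))
    · exact h5 _ _ k
  · intro h
    obtain ⟨vis, arb, hg, h1, h2, h3, h4, h5⟩ := of_acyclic hwf (W := τ.arb0)
      (fun a b k => by rcases k with k | k; exacts [Or.inl k, Or.inr (Or.inl k)])
      (fun _ _ k => k) h
    exact ⟨vis, arb, hg, h1, h2, h3, h4, fun a b k => h5 _ _ (Or.inr (Or.inr k))⟩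

lemma wrPart_fst (t : T) : (τ.wrPart t).1 = t := by
  unfold TxnTrace.wrPart; split_ifs <;> rfl

lemma wrPart_t0 : τ.wrPart τ.t0 = TxnTrace.rdPart τ.t0 := by
  simp [TxnTrace.wrPart, TxnTrace.rdPart]

lemma not_vis0_t0 (hwf : τ.WellFormed) (p : T) : ¬ τ.vis0 p τ.t0 := by
  rintro (h | ⟨x, h⟩)
  · by_cases e : p = τ.t0
    · subst e; exact hwf.po_irrefl _ h
    · exact hwf.po_irrefl _ (hwf.po_trans _ _ _ h (hwf.po_init _ e))
  · have := (hwf.rf_wf _ _ _ h).2.1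
    rw [hwf.rs_init] at this; exact this

lemma acyclic_of_split (hwf : τ.WellFormed) (h : τ.split.IsSER) (a : T) :
    ¬ TransGen (Q τ τ.vis0) a a := by
  obtain ⟨arb, ⟨⟨hi, ht⟩, htot⟩, hc, hr⟩ := h
  have hsto : ∀ x u v, τ.sto x u v → arb (τ.wrPart u) (τ.wrPart v) := fun x u v k =>
    hc _ _ (.single (Or.inr (Or.inr ⟨x, u, v, k, rfl, rfl⟩)))
  have hvis : ∀ u v, τ.vis0 u v → arb (τ.wrPart u) (TxnTrace.rdPart v) := by
    rintro u v (k | ⟨x, k⟩)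
    · exact hc _ _ (.single (Or.inl (.single (Or.inr ⟨u, v, k, rfl, rfl⟩))))
    · exact hc _ _ (.single (Or.inr (Or.inl ⟨x, u, v, k, rfl, rfl⟩)))
  have hvis' : ∀ u v, τ.vis0 u v → arb (τ.wrPart u) (τ.wrPart v) := by
    intro u v k
    have hv : v ≠ τ.t0 := by rintro rfl; exact not_vis0_t0 hwf _ k
    exact ht _ _ _ (hvis _ _ k) (hc _ _ (.single (Or.inl (.single (Or.inl ⟨v, hv, rfl, rfl⟩)))))
  intro hcyc
  refine hi (τ.wrPart a) (transGen_le (s := fun p q => arb (τ.wrPart p) (τ.wrPart q))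
    (fun _ _ _ => ht _ _ _) ?_ hcyc)
  rintro p q ((k | k | ⟨x, k⟩) | ⟨c, hpc, hne, x, w, hrf, hst⟩)
  · exact hvis' _ _ (Or.inl k)
  · exact hvis' _ _ (Or.inr k)
  · exact hsto _ _ _ k
  · refine ht _ _ _ (hvis _ _ hpc) ?_
    have hx : x ∈ τ.split.RS (TxnTrace.rdPart c) := by
      simpa [TxnTrace.split, TxnTrace.rdPart] using (hwf.rf_wf _ _ _ hrf).2.1
    obtain ⟨t, -, hmax, u, v, hrf', rfl, e⟩ := hr _ x hx
    have : v = c := (congrArg Prod.fst e).symm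
    subst this
    have : u = w := (hwf.rf_total v x (hwf.rf_wf _ _ _ hrf).2.1).unique hrf' hrf
    subst this
    have h1 := hsto _ _ _ hst
    rcases htot (TxnTrace.rdPart v) (τ.wrPart q)
      (fun e => hne (by have := congrArg Prod.fst e; rwa [wrPart_fst] at this)) with k | k
    · exact k
    · exfalso
      have h2 := hmax _ k
        (by simpa [TxnTrace.split, wrPart_fst] using (hwf.sto_dom _ _ _ hst).2)
        (fun e => hi _ (by rw [e] at h1; exact h1))
      exact hi _ (ht _ _ _ h1 h2)

lemma split_of_acyclic [Fintype T] (hwf : τ.WellFormed)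
    (h : ∀ a, ¬ TransGen (Q τ τ.vis0) a a) : τ.split.IsSER := by
  obtain ⟨r, hr⟩ := exists_rank _ h
  let g : T × Bool → ℕ := fun p => if p = τ.wrPart p.1 then 2 * r p.1 else
    1 + 2 * (Finset.univ.filter (fun s => τ.vis0 s p.1)).sup r
  have gw : ∀ t, g (τ.wrPart t) = 2 * r t := by
    intro t; simp [g, wrPart_fst]
  have gr : ∀ t, t ≠ τ.t0 → g (TxnTrace.rdPart t) =
      1 + 2 * (Finset.univ.filter (fun s => τ.vis0 s t)).sup r := by
    intro t ht; simp [g, TxnTrace.wrPart, TxnTrace.rdPart, ht]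
  have G1 : ∀ p c, τ.vis0 p c → g (τ.wrPart p) < g (TxnTrace.rdPart c) := by
    intro p c k
    have hc : c ≠ τ.t0 := by rintro rfl; exact not_vis0_t0 hwf _ k
    rw [gw, gr c hc]
    have : r p ≤ (Finset.univ.filter (fun s => τ.vis0 s c)).sup r :=
      Finset.le_sup (f := r) (by simpa using k)
    omega
  have G2 : ∀ c q, c ≠ τ.t0 → (∀ p, τ.vis0 p c → r p < r q) →
      g (TxnTrace.rdPart c) < g (τ.wrPart q) := by
    intro c q hc k
    rw [gw, gr c hc]
    have h0 : 0 < r q := Nat.zero_lt_of_lt (k _ (Or.inl (hwf.po_init c hc)))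
    have : (Finset.univ.filter (fun s => τ.vis0 s c)).sup r < r q := by
      rw [Finset.sup_lt_iff (by simpa using h0)]
      intro b hb
      exact k b (by simpa using hb)
    omega
  have G3 : ∀ c, c ≠ τ.t0 → g (TxnTrace.rdPart c) < g (τ.wrPart c) := by
    intro c hc
    refine G2 c c hc fun p k => hr _ _ (Or.inl ?_)
    rcases k with k | k
    exacts [Or.inl k, Or.inr (Or.inl k)]
  have G4 : ∀ x u v, τ.sto x u v → g (τ.wrPart u) < g (τ.wrPart v) := by
    intro x u v k
    rw [gw, gw]
    have := hr _ _ (Or.inl (Or.inr (Or.inr ⟨x, k⟩)))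
    omega
  obtain ⟨arb, ⟨⟨hi, ht⟩, htot⟩, hext⟩ := exists_total_of_rank g
  refine ⟨arb, ⟨⟨hi, ht⟩, htot⟩, ?_, ?_⟩
  · intro a b k
    refine transGen_le ht ?_ k
    rintro a b (k | ⟨x, u, v, k, rfl, rfl⟩ | ⟨x, u, v, k, rfl, rfl⟩)
    · refine transGen_le ht ?_ k
      rintro a b (⟨t, hne, rfl, rfl⟩ | ⟨u, v, k, rfl, rfl⟩)
      · exact hext _ _ (G3 _ hne)
      · exact hext _ _ (G1 _ _ (Or.inl k))
    · exact hext _ _ (G1 _ _ (Or.inr ⟨x, k⟩))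
    · exact hext _ _ (G4 _ _ _ k)
  · intro t x hx
    have ht' : t = TxnTrace.rdPart t.1 ∧ x ∈ τ.RS t.1 := by
      by_cases e : t = TxnTrace.rdPart t.1
      · refine ⟨e, ?_⟩
        simp only [TxnTrace.split] at hx
        rwa [if_pos e] at hx
      · simp only [TxnTrace.split] at hx
        rw [if_neg e] at hx
        exact absurd hx (Set.notMem_empty x)
    obtain ⟨et, hy⟩ := ht'
    clear hx
    generalize t.1 = c at et hy
    subst et
    have hc : c ≠ τ.t0 := by
      rintro rfl; rw [hwf.rs_init] at hy; exact hy
    obtain ⟨w, hw, -⟩ := hwf.rf_total c x hy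
    have hwx := (hwf.rf_wf _ _ _ hw).2.2.1
    refine ⟨τ.wrPart w, ⟨hext _ _ (G1 _ _ (Or.inr ⟨x, hw⟩)), ?_⟩, ?_, w, c, hw, rfl, rfl⟩
    · simpa [TxnTrace.split, wrPart_fst] using hwx
    · intro t' hvis hx' hne
      have h2 : t' = τ.wrPart t'.1 ∧ x ∈ τ.WS t'.1 := by
        by_cases e : t' = τ.wrPart t'.1
        · refine ⟨e, ?_⟩
          simp only [TxnTrace.split] at hx'
          rwa [if_pos e] at hx'
        · simp only [TxnTrace.split] at hx'
          rw [if_neg e] at hx'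
          exact absurd hx' (Set.notMem_empty x)
      obtain ⟨et, hy'⟩ := h2
      clear hx'
      generalize t'.1 = p at et hy'
      subst et
      rcases hwf.sto_total x p w hy' hwx (fun e => hne (by rw [e])) with k | k
      · exact hext _ _ (G4 _ _ _ k)
      · exfalso
        refine hi _ (ht _ _ _ hvis (hext _ _ ?_))
        by_cases e : c = p
        · subst e; exact G3 _ hc
        · exact G2 _ _ hc fun s hs => hr _ _ (Or.inr ⟨c, hs, e, x, w, hw, k⟩)

end PcSi

/-- trace-level content of Theorem 4: a trace is PC but not SI
iff its split trace is SER and there is a transaction `t` with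
`(t,t) ∈ R* ; sto ; cf`, where `R = (po ∪ rf ∪ sto) ∪ ((po ∪ rf ∪ sto) ; cf)`. -/
theorem pc_not_si_iff {T X V : Type*} [Fintype T] (τ : TxnTrace T X V)
    (hwf : τ.WellFormed) :
    (τ.IsPC ∧ ¬ τ.IsSI) ↔
      (τ.split.IsSER ∧ ∃ t a b,
        Relation.ReflTransGen
          (fun p q => τ.arb0 p q ∨ ∃ c, τ.arb0 p c ∧ τ.cf c q) t a ∧
        τ.stoR a b ∧ τ.cf b t) := by
  rw [PcSi.pc_iff hwf, PcSi.si_iff hwf]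
  constructor
  · rintro ⟨h1, h2⟩
    refine ⟨PcSi.split_of_acyclic hwf h1, ?_⟩
    by_contra hno
    refine h2 fun t ht => ?_
    have key : ∀ b, Relation.TransGen (PcSi.Q τ τ.arb0) t b →
        Relation.ReflTransGen (PcSi.Q τ τ.arb0) b t →
        Relation.TransGen (PcSi.Q τ τ.vis0) t b := by
      have step : ∀ p q, PcSi.Q τ τ.arb0 p q → Relation.ReflTransGen (PcSi.Q τ τ.arb0) q p →
          PcSi.Q τ τ.vis0 p q := by
        rintro p q (k | ⟨c, k | k | k, hcf⟩) hqp
        · exact Or.inl k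
        · exact Or.inr ⟨c, Or.inl k, hcf⟩
        · exact Or.inr ⟨c, Or.inr k, hcf⟩
        · exact absurd ⟨q, p, c, hqp, k, hcf⟩ hno
      intro b hb
      induction hb with
      | single k => exact fun hbt => .single (step _ _ k hbt)
      | tail k1 k2 ih =>
        exact fun hbt => .tail (ih (.head k2 hbt)) (step _ _ k2 (hbt.trans k1.to_reflTransGen))
    exact h1 t (key t ht .refl)
  · rintro ⟨h1, t, a, b, hta, hab, hbt⟩
    refine ⟨PcSi.acyclic_of_split hwf h1, fun h => h t ?_⟩
    exact Relation.TransGen.tail' hta (Or.inr ⟨b, Or.inr (Or.inr hab), hbt⟩)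
end

section
/- Let τ be a trace over (T,X,V), and let vis (a strict partial order on T) and arb (a strict total order on T with vis ⊆ arb) satisfy PoCo, CoArb, RetVal and Prefix. Then (po ∪ rf) ; cf ⊆ arb: whenever (t1,t2) ∈ po ∪ rf and (t2,t3) ∈ cf, one has (t1,t3) ∈ arb. (Claim 'vis0;cf ⊆ arb is a consequence of the PC axioms' used in the proof of Lemma 7.) -/
open scoped Classical

/-- under the PC axioms, `(po ∪ rf) ; cf ⊆ arb`. -/
theorem vis0_cf_subset_arb {T X V : Type*} [Fintype T] (τ : TxnTrace T X V)
    (hwf : τ.WellFormed) (vis arb : T → T → Prop)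
    (hvis : StrictPartialRel vis) (harb : StrictTotalRel arb)
    (hsub : ∀ a b, vis a b → arb a b)
    (hpoco : τ.PoCo vis) (hcoarb : τ.CoArb arb)
    (hret : τ.RetVal vis arb) (hpre : PrefixAx vis arb) :
    ∀ t1 t2 t3, τ.vis0 t1 t2 → τ.cf t2 t3 → arb t1 t3 := by
  intro t1 t2 t3 h12 hcf
  obtain ⟨-, x, w, hrf, hsto⟩ := hcf
  have hv12 : vis t1 t2 := hpoco _ _ (Relation.TransGen.single h12)
  by_contra hn
  -- otherwise `t3` is visible to `t2`
  have hv32 : vis t3 t2 := by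
    by_cases h : t1 = t3
    · exact h ▸ hv12
    · rcases harb.2 t1 t3 h with h' | h'
      · exact absurd h' hn
      · exact hpre _ _ _ h' hv12
  have hx : x ∈ τ.RS t2 := (hwf.rf_wf _ _ _ hrf).2.1
  obtain ⟨u, -, hmax, hu⟩ := hret t2 x hx
  have huw : u = w := (hwf.rf_total t2 x hx).unique hu hrf
  subst huw
  have hne : t3 ≠ u := by
    rintro rfl
    exact hwf.sto_irrefl _ _ hsto
  have h1 : arb t3 u := hmax t3 hv32 (hwf.sto_dom _ _ _ hsto).2 hne
  have h2 : arb u t3 := hcoarb _ _ (Relation.TransGen.single (Or.inr (Or.inr ⟨x, hsto⟩)))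
  exact harb.1.1 _ (harb.1.2 _ _ _ h1 h2)
end

section
/- Splitting preserves and reflects the cycles characterizing causal consistency: for any trace τ over (T,X,V), the conjunction '(po ∪ rf ∪ sto)⁺ is irreflexive and (po ∪ rf)⁺ ; cf is irreflexive' holds for τ if and only if the conjunction '(po' ∪ rf' ∪ sto')⁺ is irreflexive and (po' ∪ rf')⁺ ; cf' is irreflexive' holds for its split trace τ_split. (Combinatorial core of the proof of Lemma 3.) -/
open scoped Classical

open Relation in
lemma split_aux_proj {T : Type*} {R : T → T → Prop} {R' : T × Bool → T × Bool → Prop}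
    (h : ∀ p q, R' p q → TransGen R p.1 q.1 ∨ (p.1 = q.1 ∧ p.2 = false ∧ q.2 = true))
    {p q : T × Bool} (hpq : TransGen R' p q) :
    TransGen R p.1 q.1 ∨ (p.1 = q.1 ∧ p.2 = false ∧ q.2 = true) := by
  induction hpq with
  | single hs => exact h _ _ hs
  | tail _ hs ih =>
    rcases ih with ih | ⟨h1, h2, h3⟩ <;> rcases h _ _ hs with h' | ⟨h1', h2', h3'⟩
    · exact Or.inl (ih.trans h')
    · exact Or.inl (h1' ▸ ih)
    · exact Or.inl (h1 ▸ h')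
    · simp_all

lemma split_aux_wr_fst {T X V : Type*} (τ : TxnTrace T X V) (t : T) : (τ.wrPart t).1 = t := by
  unfold TxnTrace.wrPart; split_ifs <;> rfl

lemma split_aux_wr_inj {T X V : Type*} (τ : TxnTrace T X V) {s t : T}
    (h : τ.wrPart s = τ.wrPart t) : s = t := by
  rw [← split_aux_wr_fst τ s, h, split_aux_wr_fst]

open Relation in
lemma split_aux_po {T X V : Type*} (τ : TxnTrace T X V) {p q : T × Bool} (h : τ.split.po p q) :
    TransGen τ.po p.1 q.1 ∨ (p.1 = q.1 ∧ p.2 = false ∧ q.2 = true) := by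
  refine split_aux_proj ?_ h
  rintro p q (⟨t, ht, rfl, rfl⟩ | ⟨u, v, huv, rfl, rfl⟩)
  · right; simp [TxnTrace.rdPart, TxnTrace.wrPart, ht]
  · left; rw [split_aux_wr_fst]; exact .single huv

open Relation in
lemma split_aux_vis {T X V : Type*} (τ : TxnTrace T X V) {p q : T × Bool}
    (h : TransGen τ.split.vis0 p q) :
    TransGen τ.vis0 p.1 q.1 ∨ (p.1 = q.1 ∧ p.2 = false ∧ q.2 = true) := by
  refine split_aux_proj ?_ h
  rintro p q (h | ⟨x, u, v, huv, rfl, rfl⟩)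
  · exact (split_aux_po τ h).imp_left (TransGen.mono (fun _ _ h => Or.inl h) _ _)
  · left; rw [split_aux_wr_fst]; exact .single (Or.inr ⟨x, huv⟩)

open Relation in
lemma split_aux_arb {T X V : Type*} (τ : TxnTrace T X V) {p q : T × Bool}
    (h : TransGen τ.split.arb0 p q) :
    TransGen τ.arb0 p.1 q.1 ∨ (p.1 = q.1 ∧ p.2 = false ∧ q.2 = true) := by
  refine split_aux_proj ?_ h
  rintro p q (h | ⟨x, u, v, huv, rfl, rfl⟩ | ⟨x, u, v, huv, rfl, rfl⟩)
  · exact (split_aux_po τ h).imp_left (TransGen.mono (fun _ _ h => Or.inl h) _ _)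
  · left; rw [split_aux_wr_fst]; exact .single (Or.inr (Or.inl ⟨x, huv⟩))
  · left; rw [split_aux_wr_fst, split_aux_wr_fst]; exact .single (Or.inr (Or.inr ⟨x, huv⟩))

open Relation in
lemma split_aux_rd_wr {T X V : Type*} (τ : TxnTrace T X V) (t : T) :
    ReflTransGen τ.split.po (TxnTrace.rdPart t) (τ.wrPart t) := by
  by_cases ht : t = τ.t0
  · have : τ.wrPart t = TxnTrace.rdPart t := by simp [TxnTrace.rdPart, TxnTrace.wrPart, ht]
    rw [this]
  · exact .single (.single (Or.inl ⟨t, ht, rfl, rfl⟩))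

lemma split_aux_vis_step {T X V : Type*} (τ : TxnTrace T X V) {u v : T} (h : τ.vis0 u v) :
    τ.split.vis0 (τ.wrPart u) (TxnTrace.rdPart v) := by
  rcases h with h | ⟨x, h⟩
  · exact Or.inl (.single (Or.inr ⟨u, v, h, rfl, rfl⟩))
  · exact Or.inr ⟨x, u, v, h, rfl, rfl⟩

open Relation in
lemma split_aux_arb_step {T X V : Type*} (τ : TxnTrace T X V) {u v : T} (h : τ.arb0 u v) :
    TransGen τ.split.arb0 (τ.wrPart u) (τ.wrPart v) := by
  have key : τ.vis0 u v → TransGen τ.split.arb0 (τ.wrPart u) (τ.wrPart v) := fun h =>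
    TransGen.trans_left (.single ((split_aux_vis_step τ h).imp_right Or.inl))
      (ReflTransGen.mono (fun _ _ h => Or.inl h) _ _ (split_aux_rd_wr τ v))
  rcases h with h | h | ⟨x, h⟩
  · exact key (Or.inl h)
  · exact key (Or.inr h)
  · exact .single (Or.inr (Or.inr ⟨x, u, v, h, rfl, rfl⟩))

open Relation in
lemma split_aux_vis_lift {T X V : Type*} (τ : TxnTrace T X V) {u v : T}
    (h : TransGen τ.vis0 u v) :
    TransGen τ.split.vis0 (τ.wrPart u) (TxnTrace.rdPart v) := by
  induction h with
  | single h => exact .single (split_aux_vis_step τ h)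
  | tail _ h ih =>
    exact (ih.trans_left (ReflTransGen.mono (fun _ _ h => Or.inl h) _ _ (split_aux_rd_wr τ _))).tail
      (split_aux_vis_step τ h)

/-- combinatorial core of Lemma 3: the acyclicity conditions
characterizing CC hold for a trace iff they hold for its split trace. -/
theorem cc_cycles_iff_split {T X V : Type*} [Fintype T] (τ : TxnTrace T X V)
    (hwf : τ.WellFormed) :
    ((∀ t, ¬ Relation.TransGen τ.arb0 t t) ∧
      ∀ t1 t2, Relation.TransGen τ.vis0 t1 t2 → ¬ τ.cf t2 t1) ↔
    ((∀ p, ¬ Relation.TransGen τ.split.arb0 p p) ∧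
      ∀ p q, Relation.TransGen τ.split.vis0 p q → ¬ τ.split.cf q p) := by
  constructor
  · rintro ⟨hA, hC⟩
    refine ⟨fun p hp => ?_, ?_⟩
    · rcases split_aux_arb τ hp with h | ⟨_, h1, h2⟩
      · exact hA _ h
      · simp_all
    · rintro p q hpq ⟨hne, x, w, ⟨w1, u, hrf, rfl, rfl⟩, ⟨w2, v, hsto, hw, rfl⟩⟩
      obtain rfl := split_aux_wr_inj τ hw
      rcases split_aux_vis τ hpq with h | ⟨_, _, h2⟩
      · rw [split_aux_wr_fst] at h
        change Relation.TransGen τ.vis0 v u at h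
        by_cases huv : u = v
        · subst huv
          exact hA u (Relation.TransGen.mono (fun _ _ h => h.imp_right Or.inl) _ _ h)
        · exact hC _ _ h ⟨huv, x, w1, hrf, hsto⟩
      · simp [TxnTrace.rdPart] at h2
  · rintro ⟨hA, hC⟩
    refine ⟨fun t ht => hA (τ.wrPart t) ?_, ?_⟩
    · exact Relation.TransGen.lift' τ.wrPart (fun _ _ h => split_aux_arb_step τ h) _ _ ht
    · rintro t1 t2 h ⟨hne, x, w, hrf, hsto⟩
      refine hC _ _ (split_aux_vis_lift τ h) ⟨fun e => hne ?_, x, τ.wrPart w,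
        ⟨w, t2, hrf, rfl, rfl⟩, ⟨w, t1, hsto, rfl, rfl⟩⟩
      rw [← split_aux_wr_fst τ t1, ← e]; rfl
end
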